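/- arXiv:1301.0726 — 2 statements merged into one kernel-verified Lean document; each statement's English description precedes it below -/
import Mathlib

section
/- Let (X_i)_{i∈ℕ} be a sequence of identically distributed real random variables with common distribution function F, and suppose (X_i) is α-mixing with mixing coefficients (α(n)). Let r ∈ [0, 1/2) and assume α(n) ≤ K·n^{−ϑ} for all n ∈ ℕ and some constants K > 0 and ϑ > 2r. Then n^r · sup_{x∈ℝ} |F̂_n(x) − F(x)| → 0 ℙ-almost surely as n → ∞. -/
open MeasureTheory Filter Set

/-- The empirical distribution function of `X 0, …, X (n-1)` evaluated at `x`. -/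
noncomputable def empDF {Ω : Type*} (X : ℕ → Ω → ℝ) (n : ℕ) (ω : Ω) (x : ℝ) : ℝ :=
  (((Finset.range n).filter fun i => X i ω ≤ x).card : ℝ) / n

/-- Distribution function of a random variable. -/
noncomputable def distFun {Ω : Type*} [MeasurableSpace Ω] (P : Measure Ω) (Y : Ω → ℝ) (x : ℝ) : ℝ :=
  (P {ω | Y ω ≤ x}).toReal

/-- α-mixing coefficients of a sequence of real random variables. -/
noncomputable def alphaCoef {Ω : Type*} [MeasurableSpace Ω] (P : Measure Ω)
    (X : ℕ → Ω → ℝ) (n : ℕ) : ℝ :=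
  sSup { c : ℝ | ∃ (k : ℕ) (A B : Set Ω),
    MeasurableSet[⨆ i ∈ {i : ℕ | i ≤ k}, MeasurableSpace.comap (X i) Real.measurableSpace] A ∧
    MeasurableSet[⨆ i ∈ {i : ℕ | k + n ≤ i}, MeasurableSpace.comap (X i) Real.measurableSpace] B ∧
    c = |(P (A ∩ B)).toReal - (P A).toReal * (P B).toReal| }

/-!
The `L²` norm of the empirical process has to be controlled simultaneously over the sample size and
over all half-lines. For finitely many disjoint cells, choosing signs `ε p = ±1` with
`∑ p, c p p ≤ ∑ p, ∑ q, ε p * ε q * c p q` shows that the covariances of the cell indicators of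
`X i` and `X k` sum to at most `4 α(|i - k|)`, whatever the number of cells: the signed double sum
consists of four covariances of indicators of unions of cells. Hence the second moments of the
centred counts of `n` observations, summed over the cells, are
`O(n (1 + ∑_{d ≤ n} α(d))) = O(n ^ (2 - θ))`, where one may take `2 r < θ < 1`.

Rademacher–Menshov chaining, carried out at once in the sample index and in the half-line, turns
this into a bound for the maximum over all sample sizes up to `2 ^ N` and all members of a chain of
`2 ^ (N + 1)` sets, at the cost of a factor polynomial in `N`. After division by `2 ^ (2 N (1 - r))`
these bounds are summable in `N`, so the normalised maxima tend to zero almost surely. Finally,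
every half-line is sandwiched between members of two such chains whose probabilities differ by at
most `2 ^ (-N)`.
-/

open ProbabilityTheory
open scoped Topology Function

section DyadicChaining

/-- The dyadic energy of a sequence at scale `2 ^ N`: the sum, over all levels `l ≤ N`, of the
squared increments of `g` along the dyadic intervals of length `2 ^ l` in `[0, 2 ^ N]`. It is the
quantity that controls `max_{m ≤ 2 ^ N} |g m - g 0|` in the Rademacher–Menshov argument. -/
def dyadicEnergy (N : ℕ) (g : ℕ → ℝ) : ℝ :=
  ∑ l ∈ Finset.range (N + 1), ∑ j ∈ Finset.range (2 ^ (N - l)),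
    (g (2 ^ l * (j + 1)) - g (2 ^ l * j)) ^ 2

/-- The dyadic energy of a doubly indexed sequence: the sum of the squared increments of `G` over
all dyadic rectangles in `[0, 2 ^ N] × [0, 2 ^ L]`. -/
def dyadicRectEnergy (N L : ℕ) (G : ℕ → ℕ → ℝ) : ℝ :=
  ∑ l ∈ Finset.range (N + 1), ∑ j ∈ Finset.range (2 ^ (N - l)),
    dyadicEnergy L fun m => G (2 ^ l * (j + 1)) m - G (2 ^ l * j) m

lemma dyadicEnergy_nonneg (N : ℕ) (g : ℕ → ℝ) : 0 ≤ dyadicEnergy N g :=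
  Finset.sum_nonneg fun _ _ => Finset.sum_nonneg fun _ _ => sq_nonneg _

lemma dyadicRectEnergy_nonneg (N L : ℕ) (G : ℕ → ℕ → ℝ) : 0 ≤ dyadicRectEnergy N L G :=
  Finset.sum_nonneg fun _ _ => Finset.sum_nonneg fun _ _ => dyadicEnergy_nonneg _ _

lemma dyadicEnergy_succ (N : ℕ) (g : ℕ → ℝ) :
    dyadicEnergy (N + 1) g =
      dyadicEnergy N (fun m => g (2 * m)) +
        ∑ j ∈ Finset.range (2 ^ (N + 1)), (g (j + 1) - g j) ^ 2 := by
  simp only [dyadicEnergy, Finset.sum_range_succ' _ (N + 1), Nat.add_sub_add_right, pow_succ',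
    mul_assoc, pow_zero, one_mul, Nat.sub_zero]

lemma add_sq_le_succ_mul_add {n a b V W : ℝ} (hn : 0 < n) (ha : a ^ 2 ≤ W) (hb : b ^ 2 ≤ n * V) :
    (a + b) ^ 2 ≤ (n + 1) * (V + W) := by
  refine le_of_mul_le_mul_left ?_ hn
  calc n * (a + b) ^ 2 ≤ n * (a + b) ^ 2 + (n * a - b) ^ 2 := le_add_of_nonneg_right (sq_nonneg _)
    _ = (n + 1) * (n * a ^ 2 + b ^ 2) := by ring
    _ ≤ (n + 1) * (n * W + n * V) := by gcongr
    _ = n * ((n + 1) * (V + W)) := by ring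

lemma sq_sub_le_dyadicEnergy {N m : ℕ} (g : ℕ → ℝ) (hm : m ≤ 2 ^ N) :
    (g m - g 0) ^ 2 ≤ (N + 1) * dyadicEnergy N g := by
  induction N generalizing g m with
  | zero =>
    obtain rfl | rfl : m = 0 ∨ m = 1 := by rw [pow_zero] at hm; omega
    · simpa using dyadicEnergy_nonneg 0 g
    · simp [dyadicEnergy]
  | succ N ih =>
    have last_step : (g m - g (2 * (m / 2))) ^ 2 ≤
        ∑ j ∈ Finset.range (2 ^ (N + 1)), (g (j + 1) - g j) ^ 2 := by
      rcases Nat.even_or_odd' m with ⟨k, rfl | rfl⟩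
      · simpa using Finset.sum_nonneg fun j _ => sq_nonneg (g (j + 1) - g j)
      · rw [show (2 * k + 1) / 2 = k by omega]
        exact Finset.single_le_sum (f := fun j => (g (j + 1) - g j) ^ 2)
          (fun _ _ => sq_nonneg _) (Finset.mem_range.2 hm)
    have even_steps := ih (fun j => g (2 * j)) (m := m / 2) (by rw [pow_succ] at hm; omega)
    rw [dyadicEnergy_succ, ← sub_add_sub_cancel (g m) (g (2 * (m / 2))), Nat.cast_succ]
    exact add_sq_le_succ_mul_add N.cast_add_one_pos last_step even_steps

lemma sq_le_dyadicRectEnergy {N L n m : ℕ} {G : ℕ → ℕ → ℝ} (hG₁ : ∀ m, G 0 m = 0)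
    (hG₂ : ∀ n, G n 0 = 0) (hn : n ≤ 2 ^ N) (hm : m ≤ 2 ^ L) :
    G n m ^ 2 ≤ (N + 1) * (L + 1) * dyadicRectEnergy N L G :=
  calc G n m ^ 2 = (G n m - G 0 m) ^ 2 := by rw [hG₁, sub_zero]
    _ ≤ (N + 1) * dyadicEnergy N (G · m) := sq_sub_le_dyadicEnergy (G · m) hn
    _ ≤ (N + 1) * ((L + 1) * dyadicRectEnergy N L G) := by
      refine mul_le_mul_of_nonneg_left ?_ (by positivity)
      simp only [dyadicEnergy.eq_def N, dyadicRectEnergy, Finset.mul_sum _ _ ((L : ℝ) + 1)]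
      refine Finset.sum_le_sum fun l _ => Finset.sum_le_sum fun j _ => ?_
      simpa [hG₂] using
        sq_sub_le_dyadicEnergy (fun m => G (2 ^ l * (j + 1)) m - G (2 ^ l * j) m) hm
    _ = (N + 1) * (L + 1) * dyadicRectEnergy N L G := (mul_assoc _ _ _).symm

end DyadicChaining

section FiniteSums

/-- The sets `T` and `U` collect the indices of sign `+1` and `-1`: inserting one index at a time,
its sign can be chosen so that the off-diagonal terms of the signed sum never decrease it. -/
lemma exists_sum_diag_le_signed_sum {ι : Type*} (c : ι → ι → ℝ) (s : Finset ι) :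
    ∃ T ⊆ s, ∃ U ⊆ s, ∑ p ∈ s, c p p ≤
      (∑ p ∈ T, ∑ q ∈ T, c p q) + (∑ p ∈ U, ∑ q ∈ U, c p q)
        - (∑ p ∈ T, ∑ q ∈ U, c p q) - ∑ p ∈ U, ∑ q ∈ T, c p q := by
  classical
  induction s using Finset.induction_on with
  | empty => exact ⟨∅, subset_rfl, ∅, subset_rfl, by simp⟩
  | insert a s ha ih =>
    obtain ⟨T, hT, U, hU, h⟩ := ih
    have haT : a ∉ T := fun h => ha (hT h)
    have haU : a ∉ U := fun h => ha (hU h)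
    rcases le_total 0 ((∑ q ∈ T, c a q) + (∑ q ∈ T, c q a) - (∑ q ∈ U, c a q) - ∑ q ∈ U, c q a)
      with hsign | hsign
    · refine ⟨insert a T, Finset.insert_subset_insert _ hT, U,
        hU.trans (Finset.subset_insert _ _), ?_⟩
      simp only [Finset.sum_insert ha, Finset.sum_insert haT, Finset.sum_add_distrib]
      linarith
    · refine ⟨T, hT.trans (Finset.subset_insert _ _), insert a U,
        Finset.insert_subset_insert _ hU, ?_⟩
      simp only [Finset.sum_insert ha, Finset.sum_insert haU, Finset.sum_add_distrib]
      linarith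

/-- `corrSum a n = 1 + 2 (a 1 + ⋯ + a n)`: when `a d` bounds the dependence between variables at
distance `d`, this bounds (up to a factor) the variance of a block of `n` variables divided by `n`.
The summand `1` accounts for the diagonal. -/
def corrSum (a : ℕ → ℝ) (n : ℕ) : ℝ := 1 + 2 * ∑ d ∈ Finset.range n, a (d + 1)

lemma corrSum_mono {a : ℕ → ℝ} (ha : ∀ d, 1 ≤ d → 0 ≤ a d) : Monotone (corrSum a) := by
  intro m n hmn
  have := Finset.sum_le_sum_of_subset_of_nonneg (Finset.range_subset_range.2 hmn)
    fun d _ _ => ha (d + 1) d.succ_pos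
  simpa [corrSum] using this

lemma sum_range_sum_range_le_mul_corrSum {f : ℕ → ℕ → ℝ} {a : ℕ → ℝ} {C : ℝ} (hC : 0 ≤ C)
    (ha : ∀ d, 1 ≤ d → 0 ≤ a d) (hsymm : ∀ i k, f i k = f k i) (hdiag : ∀ i, f i i ≤ C)
    (hoff : ∀ i d, 1 ≤ d → f i (i + d) ≤ C * a d) (n : ℕ) :
    ∑ i ∈ Finset.range n, ∑ k ∈ Finset.range n, f i k ≤ C * (n * corrSum a n) := by
  induction n with
  | zero => simp
  | succ n ih =>
    have last_column : ∑ i ∈ Finset.range n, f i n ≤ C * ∑ d ∈ Finset.range n, a (d + 1) := by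
      rw [Finset.mul_sum, ← Finset.sum_range_reflect]
      refine Finset.sum_le_sum fun d hd => ?_
      rw [Finset.mem_range] at hd
      simpa [show n - 1 - d + (d + 1) = n by omega] using hoff (n - 1 - d) (d + 1) d.succ_pos
    have new_terms : 2 * (∑ i ∈ Finset.range n, f i n) + f n n ≤ C * corrSum a n := by
      unfold corrSum
      linarith [hdiag n]
    calc ∑ i ∈ Finset.range (n + 1), ∑ k ∈ Finset.range (n + 1), f i k
        = (∑ i ∈ Finset.range n, ∑ k ∈ Finset.range n, f i k)
            + (2 * (∑ i ∈ Finset.range n, f i n) + f n n) := by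
          simp only [Finset.sum_range_succ, Finset.sum_add_distrib, fun k => hsymm n k]
          ring
      _ ≤ C * (n * corrSum a n) + C * corrSum a n := add_le_add ih new_terms
      _ = C * ((n + 1 : ℕ) * corrSum a n) := by push_cast; ring
      _ ≤ C * ((n + 1 : ℕ) * corrSum a (n + 1)) := by gcongr; exact corrSum_mono ha n.le_succ

lemma succ_rpow_neg_le_sub {θ : ℝ} (h0 : 0 ≤ θ) (h1 : θ < 1) (d : ℕ) :
    ((d + 1 : ℕ) : ℝ) ^ (-θ) ≤
      ((d + 1 : ℕ) : ℝ) ^ (1 - θ) / (1 - θ) - (d : ℝ) ^ (1 - θ) / (1 - θ) := by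
  have hθ : 0 < 1 - θ := sub_pos.2 h1
  have hd : (0 : ℝ) < (d + 1 : ℕ) := by positivity
  have bernoulli : ((d : ℝ) / (d + 1 : ℕ)) ^ (1 - θ) ≤ 1 + (1 - θ) * (-1 / (d + 1 : ℕ)) := by
    have h : (d : ℝ) / (d + 1 : ℕ) = 1 + -1 / (d + 1 : ℕ) := by field_simp; push_cast; ring
    have hneg : -1 ≤ -1 / ((d + 1 : ℕ) : ℝ) := by
      linarith [h, div_nonneg d.cast_nonneg hd.le]
    rw [h]
    exact rpow_one_add_le_one_add_mul_self hneg hθ.le (by linarith)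
  rw [Real.div_rpow d.cast_nonneg hd.le, div_le_iff₀ (by positivity)] at bernoulli
  rw [← sub_div, le_div_iff₀ hθ, show -θ = 1 - θ - 1 by ring, Real.rpow_sub_one hd.ne']
  calc _ = ((d + 1 : ℕ) : ℝ) ^ (1 - θ)
        - (1 + (1 - θ) * (-1 / (d + 1 : ℕ))) * ((d + 1 : ℕ) : ℝ) ^ (1 - θ) := by ring
    _ ≤ _ := by linarith

lemma sum_range_succ_rpow_neg_le {θ : ℝ} (h0 : 0 ≤ θ) (h1 : θ < 1) (n : ℕ) :
    ∑ d ∈ Finset.range n, ((d + 1 : ℕ) : ℝ) ^ (-θ) ≤ (n : ℝ) ^ (1 - θ) / (1 - θ) := by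
  refine (Finset.sum_le_sum fun d _ => succ_rpow_neg_le_sub h0 h1 d).trans_eq ?_
  rw [Finset.sum_range_sub fun d : ℕ => (d : ℝ) ^ (1 - θ) / (1 - θ)]
  simp [Real.zero_rpow (sub_pos.2 h1).ne']

lemma corrSum_const_mul_rpow_neg_le {K θ : ℝ} (hK : 0 ≤ K) (h0 : 0 ≤ θ) (h1 : θ < 1) {n : ℕ}
    (hn : 1 ≤ n) :
    corrSum (fun d => K * (d : ℝ) ^ (-θ)) n ≤ (1 + 2 * (K / (1 - θ))) * (n : ℝ) ^ (1 - θ) := by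
  have hone : (1 : ℝ) ≤ (n : ℝ) ^ (1 - θ) :=
    Real.one_le_rpow (by exact_mod_cast hn) (sub_pos.2 h1).le
  have hsum := mul_le_mul_of_nonneg_left (sum_range_succ_rpow_neg_le h0 h1 n) hK
  rw [corrSum, ← Finset.mul_sum]
  calc _ ≤ (n : ℝ) ^ (1 - θ) + 2 * (K * ((n : ℝ) ^ (1 - θ) / (1 - θ))) := by gcongr
    _ = _ := by ring

end FiniteSums

section AlphaDependence

lemma indicator_one_preimage_biUnion_finset {Ω E ι : Type*} {Y : Ω → E} {s : Finset ι}
    {I : ι → Set E} (hI : (s : Set ι).PairwiseDisjoint I) :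
    (Y ⁻¹' ⋃ p ∈ s, I p).indicator (1 : Ω → ℝ) = ∑ p ∈ s, (Y ⁻¹' I p).indicator 1 := by
  ext ω
  rw [preimage_iUnion₂, Finset.sum_apply]
  exact Finset.indicator_biUnion_apply s _
    (fun p hp q hq hpq => (hI hp hq hpq).preimage Y) ω

variable {Ω E F ι : Type*} [MeasurableSpace Ω] [MeasurableSpace E] [MeasurableSpace F]
  {P : Measure Ω} {Y : Ω → E} {Z : Ω → F} {κ κ' : ℝ}

/-- `AlphaDependenceLE P Y Z κ` is the bound `α(σ(Y), σ(Z)) ≤ κ` on the strong mixing coefficient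
of the σ-algebras generated by `Y` and `Z`. It is encoded as a bound for all pairs of events rather
than on their supremum, which spares boundedness side conditions. -/
def AlphaDependenceLE (P : Measure Ω) (Y : Ω → E) (Z : Ω → F) (κ : ℝ) : Prop :=
  ∀ S T, MeasurableSet S → MeasurableSet T →
    |P.real (Y ⁻¹' S ∩ Z ⁻¹' T) - P.real (Y ⁻¹' S) * P.real (Z ⁻¹' T)| ≤ κ

lemma AlphaDependenceLE.nonneg (h : AlphaDependenceLE P Y Z κ) : 0 ≤ κ :=
  (abs_nonneg _).trans (h ∅ ∅ .empty .empty)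

lemma AlphaDependenceLE.mono (h : AlphaDependenceLE P Y Z κ) (hκ : κ ≤ κ') :
    AlphaDependenceLE P Y Z κ' :=
  fun S T hS hT => (h S T hS hT).trans hκ

lemma abs_measureReal_inter_sub_mul_le_one [IsProbabilityMeasure P] (A B : Set Ω) :
    |P.real (A ∩ B) - P.real A * P.real B| ≤ 1 :=
  abs_sub_le_of_nonneg_of_le measureReal_nonneg measureReal_le_one
    (mul_nonneg measureReal_nonneg measureReal_nonneg)
    (mul_le_one₀ measureReal_le_one measureReal_nonneg measureReal_le_one)

lemma alphaDependenceLE_alphaCoef [IsProbabilityMeasure P] (X : ℕ → Ω → ℝ) (i d : ℕ) :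
    AlphaDependenceLE P (X i) (X (i + d)) (alphaCoef P X d) := by
  intro S T hS hT
  refine le_csSup ⟨1, ?_⟩ ⟨i, X i ⁻¹' S, X (i + d) ⁻¹' T, ?_, ?_, rfl⟩
  · rintro c ⟨k, A, B, -, -, rfl⟩
    exact abs_measureReal_inter_sub_mul_le_one A B
  · exact le_iSup₂_of_le (f := fun j (_ : j ∈ {j | j ≤ i}) => MeasurableSpace.comap (X j) _)
      i (le_refl i) le_rfl _ ⟨S, hS, rfl⟩
  · exact le_iSup₂_of_le (f := fun j (_ : j ∈ {j | i + d ≤ j}) => MeasurableSpace.comap (X j) _)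
      (i + d) (le_refl (i + d)) le_rfl _ ⟨T, hT, rfl⟩

lemma memLp_indicator_one [IsFiniteMeasure P] {A : Set Ω} (hA : MeasurableSet A) :
    MemLp (A.indicator (1 : Ω → ℝ)) 2 P :=
  (memLp_const (1 : ℝ)).indicator hA

lemma covariance_indicator_one [IsProbabilityMeasure P] {A B : Set Ω} (hA : MeasurableSet A)
    (hB : MeasurableSet B) :
    cov[A.indicator 1, B.indicator 1; P] = P.real (A ∩ B) - P.real A * P.real B := by
  rw [covariance_eq_sub (memLp_indicator_one hA) (memLp_indicator_one hB), ← inter_indicator_one,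
    integral_indicator_one (hA.inter hB), integral_indicator_one hA, integral_indicator_one hB]

lemma AlphaDependenceLE.abs_sum_covariance_le [IsProbabilityMeasure P]
    (h : AlphaDependenceLE P Y Z κ) (hY : Measurable Y) (hZ : Measurable Z) {T U : Finset ι}
    {I : ι → Set E} {J : ι → Set F} (hI : ∀ p, MeasurableSet (I p)) (hJ : ∀ p, MeasurableSet (J p))
    (hT : (T : Set ι).PairwiseDisjoint I) (hU : (U : Set ι).PairwiseDisjoint J) :
    |∑ p ∈ T, ∑ q ∈ U, cov[(Y ⁻¹' I p).indicator 1, (Z ⁻¹' J q).indicator 1; P]| ≤ κ := by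
  have hIT : MeasurableSet (⋃ p ∈ T, I p) := T.measurableSet_biUnion fun p _ => hI p
  have hJU : MeasurableSet (⋃ q ∈ U, J q) := U.measurableSet_biUnion fun q _ => hJ q
  rw [← covariance_sum_sum' (fun p _ => memLp_indicator_one (hY (hI p)))
    (fun q _ => memLp_indicator_one (hZ (hJ q))), ← indicator_one_preimage_biUnion_finset hT,
    ← indicator_one_preimage_biUnion_finset hU, covariance_indicator_one (hY hIT) (hZ hJU)]
  exact h _ _ hIT hJU

/-- The bound does not grow with the number of cells: a choice of signs reduces the sum over the
diagonal to four rectangles, that is, to four pairs of events. -/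
lemma AlphaDependenceLE.sum_covariance_le [IsProbabilityMeasure P]
    (h : AlphaDependenceLE P Y Z κ) (hY : Measurable Y) (hZ : Measurable Z) {s : Finset ι}
    {I : ι → Set E} {J : ι → Set F} (hI : ∀ p, MeasurableSet (I p)) (hJ : ∀ p, MeasurableSet (J p))
    (hdI : (s : Set ι).PairwiseDisjoint I) (hdJ : (s : Set ι).PairwiseDisjoint J) :
    ∑ p ∈ s, cov[(Y ⁻¹' I p).indicator 1, (Z ⁻¹' J p).indicator 1; P] ≤ 4 * κ := by
  obtain ⟨T, hT, U, hU, hsigned⟩ := exists_sum_diag_le_signed_sum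
    (fun p q => cov[(Y ⁻¹' I p).indicator 1, (Z ⁻¹' J q).indicator 1; P]) s
  have rectangle {A B : Finset ι} (hA : A ⊆ s) (hB : B ⊆ s) :=
    abs_le.1 <| h.abs_sum_covariance_le hY hZ hI hJ
      (hdI.subset (Finset.coe_subset.2 hA)) (hdJ.subset (Finset.coe_subset.2 hB))
  linarith [(rectangle hT hT).2, (rectangle hU hU).2, (rectangle hT hU).1, (rectangle hU hT).1]

end AlphaDependence

section CenteredCount

variable {Ω E ι : Type*} [MeasurableSpace Ω] {P : Measure Ω}

/-- The number of indices `i ∈ I` with `X i ∈ S`, minus its expectation. -/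
noncomputable def centeredCount (P : Measure Ω) (X : ι → Ω → E) (I : Finset ι) (S : Set E)
    (ω : Ω) : ℝ :=
  ∑ i ∈ I, ((X i ⁻¹' S).indicator 1 ω - P.real (X i ⁻¹' S))

@[simp]
lemma centeredCount_empty (X : ι → Ω → E) (S : Set E) (ω : Ω) : centeredCount P X ∅ S ω = 0 := rfl

@[simp]
lemma centeredCount_empty_set (X : ι → Ω → E) (I : Finset ι) (ω : Ω) :
    centeredCount P X I ∅ ω = 0 := by
  simp [centeredCount]

lemma centeredCount_range_sub {m n : ℕ} (X : ℕ → Ω → E) (S : Set E) (ω : Ω) (hmn : m ≤ n) :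
    centeredCount P X (Finset.range n) S ω - centeredCount P X (Finset.range m) S ω =
      centeredCount P (fun i => X (m + i)) (Finset.range (n - m)) S ω := by
  rw [centeredCount, centeredCount, ← Finset.sum_Ico_eq_sub _ hmn, Finset.sum_Ico_eq_sum_range]
  rfl

lemma abs_centeredCount_le_of_subset [IsFiniteMeasure P] {X : ι → Ω → E} {I : Finset ι}
    {S T U : Set E} {δ : ℝ} (hST : S ⊆ T) (hTU : T ⊆ U)
    (hδ : ∀ i ∈ I, P.real (X i ⁻¹' U) - P.real (X i ⁻¹' S) ≤ δ) (ω : Ω) :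
    |centeredCount P X I T ω| ≤
      |centeredCount P X I S ω| + |centeredCount P X I U ω| + I.card * δ := by
  have step {A B : Set E} (hAB : A ⊆ B) (hSA : S ⊆ A) (hBU : B ⊆ U) :
      centeredCount P X I A ω ≤ centeredCount P X I B ω + I.card * δ := by
    rw [centeredCount, centeredCount, ← nsmul_eq_mul, ← Finset.sum_const, ← Finset.sum_add_distrib]
    refine Finset.sum_le_sum fun i hi => ?_
    have hind : (X i ⁻¹' A).indicator 1 ω ≤ (X i ⁻¹' B).indicator (1 : Ω → ℝ) ω :=
      indicator_le_indicator_of_subset (preimage_mono hAB) (fun _ => zero_le_one) ω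
    have hA : P.real (X i ⁻¹' S) ≤ P.real (X i ⁻¹' A) := measureReal_mono (preimage_mono hSA)
    have hB : P.real (X i ⁻¹' B) ≤ P.real (X i ⁻¹' U) := measureReal_mono (preimage_mono hBU)
    linarith [hδ i hi]
  refine abs_le.2 ⟨?_, ?_⟩
  · linarith [step hST subset_rfl hTU, neg_abs_le (centeredCount P X I S ω),
      abs_nonneg (centeredCount P X I U ω)]
  · linarith [step hTU hST subset_rfl, le_abs_self (centeredCount P X I U ω),
      abs_nonneg (centeredCount P X I S ω)]

variable [MeasurableSpace E]

lemma centeredCount_diff [IsFiniteMeasure P] {X : ι → Ω → E} (hX : ∀ i, Measurable (X i))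
    {S T : Set E} (hS : MeasurableSet S) (hST : S ⊆ T) (I : Finset ι) (ω : Ω) :
    centeredCount P X I (T \ S) ω = centeredCount P X I T ω - centeredCount P X I S ω := by
  rw [centeredCount, centeredCount, centeredCount, ← Finset.sum_sub_distrib]
  refine Finset.sum_congr rfl fun i _ => ?_
  rw [preimage_sdiff, measureReal_sdiff (preimage_mono hST) (hX i hS),
    indicator_sdiff (preimage_mono hST), Pi.sub_apply]
  ring

lemma integrable_sq_centeredCount [IsFiniteMeasure P] {X : ι → Ω → E} (hX : ∀ i, Measurable (X i))
    {S : Set E} (hS : MeasurableSet S) (I : Finset ι) :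
    Integrable (fun ω => centeredCount P X I S ω ^ 2) P :=
  (memLp_finsetSum I fun i _ =>
    (memLp_indicator_one (hX i hS)).sub (memLp_const _)).integrable_sq

lemma integral_sq_centeredCount [IsFiniteMeasure P] {X : ι → Ω → E} (hX : ∀ i, Measurable (X i))
    {S : Set E} (hS : MeasurableSet S) (I : Finset ι) :
    ∫ ω, centeredCount P X I S ω ^ 2 ∂P =
      ∑ i ∈ I, ∑ k ∈ I, cov[(X i ⁻¹' S).indicator 1, (X k ⁻¹' S).indicator 1; P] := by
  have hL2 (i : ι) : MemLp ((X i ⁻¹' S).indicator (1 : Ω → ℝ)) 2 P :=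
    memLp_indicator_one (hX i hS)
  have hmean : ∫ ω, ∑ i ∈ I, (X i ⁻¹' S).indicator 1 ω ∂P = ∑ i ∈ I, P.real (X i ⁻¹' S) := by
    rw [integral_finsetSum I fun i _ => (hL2 i).integrable one_le_two]
    exact Finset.sum_congr rfl fun i _ => integral_indicator_one (hX i hS)
  rw [← variance_fun_sum' fun i _ => hL2 i,
    variance_eq_integral (Finset.aemeasurable_fun_sum I fun i _ => (hL2 i).aemeasurable), hmean]
  simp only [centeredCount, Finset.sum_sub_distrib]

lemma sum_integral_sq_centeredCount_le [IsProbabilityMeasure P] {X : ℕ → Ω → E}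
    (hX : ∀ i, Measurable (X i)) {a : ℕ → ℝ}
    (hα : ∀ i d, 1 ≤ d → AlphaDependenceLE P (X i) (X (i + d)) (a d))
    {s : Finset ι} {I : ι → Set E} (hI : ∀ p, MeasurableSet (I p))
    (hd : (s : Set ι).PairwiseDisjoint I) (n : ℕ) :
    ∑ p ∈ s, ∫ ω, centeredCount P X (Finset.range n) (I p) ω ^ 2 ∂P ≤ 4 * (n * corrSum a n) := by
  simp only [integral_sq_centeredCount hX (hI _)]
  rw [Finset.sum_comm]
  simp only [Finset.sum_comm (s := s)]
  refine sum_range_sum_range_le_mul_corrSum zero_le_four (fun d hd => (hα 0 d hd).nonneg)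
    (fun i k => ?_) (fun i => ?_) (fun i d h1 => ?_) n
  · exact Finset.sum_congr rfl fun p _ => covariance_comm _ _
  · have hone : AlphaDependenceLE P (X i) (X i) 1 :=
      fun S T _ _ => abs_measureReal_inter_sub_mul_le_one _ _
    simpa using hone.sum_covariance_le (hX i) (hX i) hI hI hd hd
  · exact (hα i d h1).sum_covariance_le (hX i) (hX _) hI hI hd hd

end CenteredCount

section MaximalInequality

variable {Ω E : Type*} [MeasurableSpace Ω] {P : Measure Ω}

lemma dyadicRectEnergy_centeredCount (X : ℕ → Ω → E) (H : ℕ → Set E) (N L : ℕ) (ω : Ω) :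
    dyadicRectEnergy N L (fun n m => centeredCount P X (Finset.range n) (H m) ω) =
      ∑ l ∈ Finset.range (N + 1), ∑ j ∈ Finset.range (2 ^ (N - l)), dyadicEnergy L fun m =>
        centeredCount P (fun i => X (2 ^ l * j + i)) (Finset.range (2 ^ l)) (H m) ω := by
  refine Finset.sum_congr rfl fun l _ => Finset.sum_congr rfl fun j _ => ?_
  simp only [mul_add_one, centeredCount_range_sub X _ ω (Nat.le_add_right _ _),
    Nat.add_sub_cancel_left]

variable [MeasurableSpace E]

/-- An increasing sequence of measurable sets starting from `∅`; it plays the role of the grid of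
half-lines along which the empirical distribution function is chained. -/
structure IsMeasurableChain (H : ℕ → Set E) : Prop where
  monotone : Monotone H
  zero : H 0 = ∅
  measurableSet (m : ℕ) : MeasurableSet (H m)

lemma IsMeasurableChain.pairwise_disjoint_cells {H : ℕ → Set E} (hH : IsMeasurableChain H)
    (k : ℕ) : Pairwise (Disjoint on fun j => H (k * (j + 1)) \ H (k * j)) := by
  have hmono : Monotone fun j => H (k * j) := hH.monotone.comp (Monotone.const_mul' monotone_id k)
  simpa only [← hmono.disjointed_add_one] using
    (disjoint_disjointed _).comp_of_injective (add_left_injective 1)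

lemma dyadicEnergy_centeredCount [IsFiniteMeasure P] {X : ℕ → Ω → E} (hX : ∀ i, Measurable (X i))
    {H : ℕ → Set E} (hH : IsMeasurableChain H) (n L : ℕ) (ω : Ω) :
    dyadicEnergy L (fun m => centeredCount P X (Finset.range n) (H m) ω) =
      ∑ l ∈ Finset.range (L + 1), ∑ j ∈ Finset.range (2 ^ (L - l)),
        centeredCount P X (Finset.range n) (H (2 ^ l * (j + 1)) \ H (2 ^ l * j)) ω ^ 2 := by
  refine Finset.sum_congr rfl fun l _ => Finset.sum_congr rfl fun j _ => ?_
  rw [centeredCount_diff hX (hH.measurableSet _)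
    (hH.monotone (Nat.mul_le_mul_left _ j.le_succ))]

lemma integrable_dyadicEnergy_centeredCount [IsFiniteMeasure P] {X : ℕ → Ω → E}
    (hX : ∀ i, Measurable (X i)) {H : ℕ → Set E} (hH : IsMeasurableChain H) (n L : ℕ) :
    Integrable
      (fun ω => dyadicEnergy L fun m => centeredCount P X (Finset.range n) (H m) ω) P := by
  simp only [dyadicEnergy_centeredCount hX hH]
  exact integrable_finsetSum _ fun l _ => integrable_finsetSum _ fun j _ =>
    integrable_sq_centeredCount hX ((hH.measurableSet _).diff (hH.measurableSet _)) _

lemma integral_dyadicEnergy_centeredCount_le [IsProbabilityMeasure P] {X : ℕ → Ω → E}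
    (hX : ∀ i, Measurable (X i)) {a : ℕ → ℝ}
    (hα : ∀ i d, 1 ≤ d → AlphaDependenceLE P (X i) (X (i + d)) (a d))
    {H : ℕ → Set E} (hH : IsMeasurableChain H) (n L : ℕ) :
    ∫ ω, dyadicEnergy L (fun m => centeredCount P X (Finset.range n) (H m) ω) ∂P ≤
      (L + 1) * (4 * (n * corrSum a n)) := by
  have hcell (l j : ℕ) : MeasurableSet (H (2 ^ l * (j + 1)) \ H (2 ^ l * j)) :=
    (hH.measurableSet _).diff (hH.measurableSet _)
  have hint (l j : ℕ) := integrable_sq_centeredCount (P := P) hX (hcell l j) (Finset.range n)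
  simp only [dyadicEnergy_centeredCount hX hH]
  rw [integral_finsetSum _ fun l _ => integrable_finsetSum _ fun j _ => hint l j]
  simp only [fun l => integral_finsetSum (Finset.range (2 ^ (L - l))) fun j _ => hint l j]
  have level (l : ℕ) := sum_integral_sq_centeredCount_le hX hα (hcell l)
    ((hH.pairwise_disjoint_cells (2 ^ l)).set_pairwise (Finset.range (2 ^ (L - l)))) n
  simpa using Finset.sum_le_card_nsmul (Finset.range (L + 1)) _ _ fun l _ => level l

lemma integrable_dyadicRectEnergy_centeredCount [IsFiniteMeasure P] {X : ℕ → Ω → E}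
    (hX : ∀ i, Measurable (X i)) {H : ℕ → Set E} (hH : IsMeasurableChain H) (N L : ℕ) :
    Integrable (fun ω => dyadicRectEnergy N L fun n m =>
      centeredCount P X (Finset.range n) (H m) ω) P := by
  simp only [dyadicRectEnergy_centeredCount]
  exact integrable_finsetSum _ fun l _ => integrable_finsetSum _ fun j _ =>
    integrable_dyadicEnergy_centeredCount (fun i => hX _) hH _ L

lemma integral_dyadicRectEnergy_centeredCount_le [IsProbabilityMeasure P] {X : ℕ → Ω → E}
    (hX : ∀ i, Measurable (X i)) {a : ℕ → ℝ}
    (hα : ∀ i d, 1 ≤ d → AlphaDependenceLE P (X i) (X (i + d)) (a d))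
    {H : ℕ → Set E} (hH : IsMeasurableChain H) (N L : ℕ) :
    ∫ ω, dyadicRectEnergy N L (fun n m => centeredCount P X (Finset.range n) (H m) ω) ∂P ≤
      4 * ((N + 1) * (L + 1)) * (2 ^ N * corrSum a (2 ^ N)) := by
  have ha (d : ℕ) (hd : 1 ≤ d) : 0 ≤ a d := (hα 0 d hd).nonneg
  have hint (l j : ℕ) := integrable_dyadicEnergy_centeredCount (P := P)
    (fun i => hX (2 ^ l * j + i)) hH (2 ^ l) L
  have block {l : ℕ} (hl : l ∈ Finset.range (N + 1)) (j : ℕ) :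
      ∫ ω, dyadicEnergy L (fun m =>
          centeredCount P (fun i => X (2 ^ l * j + i)) (Finset.range (2 ^ l)) (H m) ω) ∂P ≤
        (L + 1) * (4 * (2 ^ l * corrSum a (2 ^ N))) := by
    refine (integral_dyadicEnergy_centeredCount_le (fun i => hX _)
      (fun i d hd => by simpa [add_assoc] using hα (2 ^ l * j + i) d hd) hH (2 ^ l) L).trans ?_
    push_cast
    gcongr
    exact corrSum_mono ha
      (Nat.pow_le_pow_right two_pos (Nat.lt_succ_iff.1 (Finset.mem_range.1 hl)))
  simp only [dyadicRectEnergy_centeredCount]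
  rw [integral_finsetSum _ fun l _ => integrable_finsetSum _ fun j _ => hint l j]
  simp only [fun l => integral_finsetSum (Finset.range (2 ^ (N - l))) fun j _ => hint l j]
  calc _ ≤ ∑ l ∈ Finset.range (N + 1), ∑ j ∈ Finset.range (2 ^ (N - l)),
        (L + 1) * (4 * (2 ^ l * corrSum a (2 ^ N))) :=
      Finset.sum_le_sum fun l hl => Finset.sum_le_sum fun j _ => block hl j
    _ = ∑ l ∈ Finset.range (N + 1), (L + 1) * (4 * (2 ^ N * corrSum a (2 ^ N))) := by
      refine Finset.sum_congr rfl fun l hl => ?_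
      rw [Finset.sum_const, Finset.card_range, nsmul_eq_mul,
        ← pow_sub_mul_pow (2 : ℝ) (Nat.lt_succ_iff.1 (Finset.mem_range.1 hl))]
      push_cast
      ring
    _ = 4 * ((N + 1) * (L + 1)) * (2 ^ N * corrSum a (2 ^ N)) := by
      rw [Finset.sum_const, Finset.card_range, nsmul_eq_mul]
      push_cast
      ring

end MaximalInequality

section AlmostSure

lemma ae_summable_of_summable_integral_norm {Ω E ι : Type*} [MeasurableSpace Ω] {μ : Measure Ω}
    [NormedAddCommGroup E] [CompleteSpace E] [Countable ι] {F : ι → Ω → E}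
    (hint : ∀ i, Integrable (F i) μ) (hsum : Summable fun i => ∫ ω, ‖F i ω‖ ∂μ) :
    ∀ᵐ ω ∂μ, Summable fun i => F i ω := by
  have hF (i : ι) : AEMeasurable (fun ω => ‖F i ω‖ₑ) μ := (hint i).1.enorm
  have hfinite : ∫⁻ ω, ∑' i, ‖F i ω‖ₑ ∂μ ≠ ⊤ := by
    rw [lintegral_tsum hF]
    simpa only [ofReal_integral_norm_eq_lintegral_enorm (hint _)] using hsum.tsum_ofReal_ne_top
  filter_upwards [ae_lt_top' (AEMeasurable.tsum hF) hfinite] with ω hω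
  exact .of_nnnorm (ENNReal.tsum_coe_ne_top_iff_summable.1 hω.ne)

variable {Ω E : Type*} [MeasurableSpace Ω] [MeasurableSpace E] {P : Measure Ω}

lemma ae_exists_tendsto_zero_abs_centeredCount_le [IsProbabilityMeasure P] {X : ℕ → Ω → E}
    (hX : ∀ i, Measurable (X i)) {a : ℕ → ℝ}
    (hα : ∀ i d, 1 ≤ d → AlphaDependenceLE P (X i) (X (i + d)) (a d))
    {H : ℕ → ℕ → Set E} (hH : ∀ N, IsMeasurableChain (H N)) {L : ℕ → ℕ} {b : ℕ → ℝ}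
    (hb : ∀ N, 0 < b N)
    (hsum : Summable fun N : ℕ =>
      ((N + 1) * (L N + 1)) ^ 2 * (2 ^ N * corrSum a (2 ^ N)) / b N ^ 2) :
    ∀ᵐ ω ∂P, ∃ u : ℕ → ℝ, Tendsto u atTop (𝓝 0) ∧ ∀ N n m, n ≤ 2 ^ N → m ≤ 2 ^ L N →
      |centeredCount P X (Finset.range n) (H N m) ω| ≤ u N * b N := by
  let Q : ℕ → Ω → ℝ := fun N ω => ((N + 1) * (L N + 1) / b N ^ 2) *
    dyadicRectEnergy N (L N) fun n m => centeredCount P X (Finset.range n) (H N m) ω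
  have hQ_nonneg (N : ℕ) (ω : Ω) : 0 ≤ Q N ω :=
    mul_nonneg (by positivity) (dyadicRectEnergy_nonneg _ _ _)
  have hQ_int (N : ℕ) : Integrable (Q N) P :=
    (integrable_dyadicRectEnergy_centeredCount hX (hH N) N (L N)).const_mul _
  have hQ_le (N : ℕ) : ∫ ω, ‖Q N ω‖ ∂P ≤
      4 * (((N + 1) * (L N + 1)) ^ 2 * (2 ^ N * corrSum a (2 ^ N)) / b N ^ 2) := by
    simp only [Real.norm_of_nonneg (hQ_nonneg N _)]
    rw [integral_const_mul]
    refine (mul_le_mul_of_nonneg_left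
      (integral_dyadicRectEnergy_centeredCount_le hX hα (hH N) N (L N))
      (by positivity)).trans_eq ?_
    ring
  have hQ_sum : Summable fun N => ∫ ω, ‖Q N ω‖ ∂P :=
    (hsum.mul_left 4).of_nonneg_of_le (fun N => integral_nonneg fun ω => norm_nonneg _) hQ_le
  filter_upwards [ae_summable_of_summable_integral_norm hQ_int hQ_sum] with ω hω
  refine ⟨fun N => √(Q N ω), by simpa using hω.tendsto_atTop_zero.sqrt, fun N n m hn hm => ?_⟩
  rw [← abs_of_pos (hb N), ← Real.sqrt_sq_eq_abs (b N), ← Real.sqrt_mul (hQ_nonneg N ω)]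
  have chaining := sq_le_dyadicRectEnergy
    (G := fun n m => centeredCount P X (Finset.range n) (H N m) ω)
    (fun m => centeredCount_empty X _ ω)
    (fun n => by rw [(hH N).zero, centeredCount_empty_set]) hn hm
  refine Real.abs_le_sqrt (chaining.trans_eq ?_)
  have := (hb N).ne'
  simp only [Q]
  field_simp

end AlmostSure

section DyadicBlocks

lemma two_pow_mul_corrSum_div_le {K r θ : ℝ} (hK : 0 ≤ K) (h0 : 0 ≤ θ) (h1 : θ < 1) (N : ℕ) :
    2 ^ N * corrSum (fun d => K * (d : ℝ) ^ (-θ)) (2 ^ N) / (((2 : ℝ) ^ N) ^ (1 - r)) ^ 2 ≤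
      (1 + 2 * (K / (1 - θ))) * ((2 : ℝ) ^ (2 * r - θ)) ^ N := by
  have hpos : (0 : ℝ) < 2 ^ N := by positivity
  have hcorr := corrSum_const_mul_rpow_neg_le hK h0 h1 (Nat.one_le_two_pow (n := N))
  push_cast at hcorr
  have hexp : ((2 : ℝ) ^ (2 * r - θ)) ^ N * (((2 : ℝ) ^ N) ^ (1 - r)) ^ 2 =
      2 ^ N * ((2 : ℝ) ^ N) ^ (1 - θ) := by
    rw [Real.rpow_pow_comm zero_le_two (2 * r - θ), ← Real.rpow_mul_natCast hpos.le,
      ← Real.rpow_add hpos, ← Real.rpow_one_add' hpos.le (by linarith)]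
    congr 1
    push_cast
    ring
  rw [div_le_iff₀ (by positivity), mul_assoc, hexp]
  calc _ ≤ (2 : ℝ) ^ N * ((1 + 2 * (K / (1 - θ))) * (2 ^ N) ^ (1 - θ)) := by gcongr
    _ = _ := by ring

lemma summable_sq_mul_two_pow_mul_corrSum_div {K r θ : ℝ} (hK : 0 ≤ K) (h0 : 0 ≤ θ) (h1 : θ < 1)
    (hr : 2 * r < θ) :
    Summable fun N : ℕ => (((N : ℝ) + 1) * ((N + 1 : ℕ) + 1)) ^ 2 *
      (2 ^ N * corrSum (fun d => K * (d : ℝ) ^ (-θ)) (2 ^ N)) / (((2 : ℝ) ^ N) ^ (1 - r)) ^ 2 := by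
  have hρ : ‖(2 : ℝ) ^ (2 * r - θ)‖ < 1 := by
    rw [Real.norm_of_nonneg (by positivity)]
    exact Real.rpow_lt_one_of_one_lt_of_neg one_lt_two (by linarith)
  have hsum : Summable fun N : ℕ =>
      (((2 : ℝ) ^ (2 * r - θ)) ^ 2)⁻¹ * (1 + 2 * (K / (1 - θ))) *
        (((N + 2 : ℕ) : ℝ) ^ 4 * ((2 : ℝ) ^ (2 * r - θ)) ^ (N + 2)) :=
    ((summable_nat_add_iff (f := fun k : ℕ => (k : ℝ) ^ 4 * ((2 : ℝ) ^ (2 * r - θ)) ^ k) 2).2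
      (summable_pow_mul_geometric_of_norm_lt_one 4 hρ)).mul_left _
  have hcorr (N : ℕ) : 0 ≤ corrSum (fun d => K * (d : ℝ) ^ (-θ)) (2 ^ N) := by
    unfold corrSum
    positivity
  refine hsum.of_nonneg_of_le (fun N => ?_) fun N => ?_
  · have := hcorr N
    positivity
  · have hpoly : ((N : ℝ) + 1) * ((N + 1 : ℕ) + 1) ≤ (N + 2) * (N + 2) := by
      push_cast
      nlinarith [N.cast_nonneg (α := ℝ)]
    have := hcorr N
    have := sub_pos.2 h1
    rw [mul_div_assoc]
    calc _ ≤ (((N : ℝ) + 2) * (N + 2)) ^ 2 *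
            ((1 + 2 * (K / (1 - θ))) * ((2 : ℝ) ^ (2 * r - θ)) ^ N) := by
          gcongr ?_ ^ 2 * ?_
          exact two_pow_mul_corrSum_div_le hK h0 h1 N
      _ = _ := by
          push_cast
          field_simp
          ring

lemma tendsto_rpow_neg_mul_of_dyadic {ρ : ℝ} (hρ : 0 ≤ ρ) {s u : ℕ → ℝ} (hs : ∀ n, 0 ≤ s n)
    (hu : Tendsto u atTop (𝓝 0))
    (hsu : ∀ N n, 1 ≤ n → n ≤ 2 ^ N → s n ≤ u N * ((2 : ℝ) ^ N) ^ ρ) :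
    Tendsto (fun n : ℕ => (n : ℝ) ^ (-ρ) * s n) atTop (𝓝 0) := by
  have hlog : Tendsto (fun n => Nat.log 2 n + 1) atTop atTop :=
    (tendsto_add_atTop_nat 1).comp (tendsto_atTop_atTop_of_monotone Nat.log_monotone
      fun N => ⟨2 ^ N, (Nat.log_pow one_lt_two N).ge⟩)
  refine squeeze_zero' (.of_forall fun n => mul_nonneg (by positivity) (hs n)) ?_
    (by simpa using ((hu.comp hlog).abs.const_mul ((2 : ℝ) ^ ρ)))
  filter_upwards [eventually_ge_atTop 1] with n hn
  set N := Nat.log 2 n + 1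
  have hn_pos : (0 : ℝ) < n := by exact_mod_cast hn
  have hN : (2 : ℝ) ^ N ≤ 2 * n := by
    rw [pow_succ']
    exact_mod_cast Nat.mul_le_mul_left 2 (Nat.pow_log_le_self 2 (by omega))
  calc (n : ℝ) ^ (-ρ) * s n ≤ n ^ (-ρ) * (|u N| * (2 * n) ^ ρ) := by
        gcongr
        refine (hsu N n hn (Nat.lt_pow_succ_log_self one_lt_two n).le).trans ?_
        gcongr
        exact le_abs_self _
    _ = 2 ^ ρ * |u N| := by
        rw [Real.mul_rpow zero_le_two hn_pos.le, Real.rpow_neg hn_pos.le]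
        field_simp

end DyadicBlocks

section HalfLines

variable {E : Type*} [MeasurableSpace E] {μ : Measure E}

lemma measureReal_le_of_forall_isCompact_subset [TopologicalSpace E] [IsFiniteMeasure μ]
    [μ.InnerRegularCompactLTTop] {A : Set E} {c : ℝ} (hA : MeasurableSet A)
    (h : ∀ K ⊆ A, IsCompact K → μ.real K ≤ c) : μ.real A ≤ c := by
  have hc : 0 ≤ c := measureReal_nonneg.trans (h ∅ (empty_subset A) isCompact_empty)
  by_contra! hlt
  obtain ⟨K, hKA, hK, hcK⟩ := hA.exists_lt_isCompact_of_ne_top (measure_ne_top μ A)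
    ((ENNReal.ofReal_lt_iff_lt_toReal hc (measure_ne_top μ A)).2 hlt)
  exact ((ENNReal.ofReal_lt_iff_lt_toReal hc (measure_ne_top μ K)).1 hcK).not_ge (h K hKA hK)

variable [LinearOrder E]

lemma monotone_measureReal_Iic [IsFiniteMeasure μ] : Monotone fun x => μ.real (Iic x) :=
  fun _ _ hxy => measureReal_mono (Iic_subset_Iic.2 hxy)

variable [TopologicalSpace E] [OrderTopology E] [BorelSpace E]

lemma measurableSet_setOf_measureReal_Iic_lt [IsFiniteMeasure μ] (t : ℝ) :
    MeasurableSet {x | μ.real (Iic x) < t} :=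
  measurableSet_lt monotone_measureReal_Iic.measurable measurable_const

lemma measurableSet_lowerBounds (s : Set E) : MeasurableSet (lowerBounds s) := by
  have : IsLowerSet (lowerBounds s) := fun _ _ hyx hx _ hz => hyx.trans (hx hz)
  exact this.ordConnected.measurableSet

variable [μ.InnerRegularCompactLTTop]

lemma measureReal_setOf_measureReal_Iic_lt_le [IsFiniteMeasure μ] {t : ℝ} (ht : 0 ≤ t) :
    μ.real {x | μ.real (Iic x) < t} ≤ t := by
  refine measureReal_le_of_forall_isCompact_subset
    (measurableSet_setOf_measureReal_Iic_lt t) fun K hKt hK => ?_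
  rcases K.eq_empty_or_nonempty with rfl | hne
  · simpa using ht
  · obtain ⟨x, hxK, hx⟩ := hK.exists_isGreatest hne
    exact (measureReal_mono fun y hy => hx hy).trans (hKt hxK).le

lemma le_measureReal_lowerBounds_setOf_le_measureReal_Iic [IsProbabilityMeasure μ] {t : ℝ}
    (ht : t ≤ 1) : t ≤ μ.real (lowerBounds {y | t ≤ μ.real (Iic y)}) := by
  have hmeas : MeasurableSet (lowerBounds {y | t ≤ μ.real (Iic y)}) :=
    measurableSet_lowerBounds _
  suffices μ.real (lowerBounds {y | t ≤ μ.real (Iic y)})ᶜ ≤ 1 - t by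
    rw [probReal_compl_eq_one_sub hmeas] at this
    linarith
  refine measureReal_le_of_forall_isCompact_subset hmeas.compl fun K hKt hK => ?_
  rcases K.eq_empty_or_nonempty with rfl | hne
  · simpa using ht
  · obtain ⟨x, hxK, hx⟩ := hK.exists_isLeast hne
    obtain ⟨y, hy, hyx⟩ : ∃ y, t ≤ μ.real (Iic y) ∧ y < x := by
      simpa [lowerBounds] using hKt hxK
    calc μ.real K ≤ μ.real (Iic y)ᶜ :=
          measureReal_mono fun z hz => (hyx.trans_le (hx hz)).not_ge
      _ = 1 - μ.real (Iic y) := probReal_compl_eq_one_sub measurableSet_Iic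
      _ ≤ 1 - t := by linarith

/-- Two chains rather than one because of atoms: where the distribution function jumps, `μ (H m)`
may lie far below `m / M` and `μ (G m)` far above it. -/
lemma exists_isMeasurableChain_bracketing_Iic [IsProbabilityMeasure μ] [NoMinOrder E] {M : ℕ}
    (hM : 0 < M) :
    ∃ G H : ℕ → Set E, IsMeasurableChain G ∧ IsMeasurableChain H ∧
      ∀ x, ∃ m ≤ M, G m ⊆ Iic x ∧ Iic x ⊆ H (m + 1) ∧
        μ.real (H (m + 1)) - μ.real (G m) ≤ (M : ℝ)⁻¹ := by
  have hM' : (0 : ℝ) < M := by exact_mod_cast hM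
  have hdiv {m m' : ℕ} (h : m ≤ m') : (m : ℝ) / M ≤ m' / M := by gcongr
  refine ⟨fun m => lowerBounds {y | (m : ℝ) / M ≤ μ.real (Iic y)},
    fun m => {x | μ.real (Iic x) < m / M},
    ⟨fun _ _ h => lowerBounds_mono_set fun _ => (hdiv h).trans, ?_,
      fun _ => measurableSet_lowerBounds _⟩,
    ⟨fun _ _ h _ hx => hx.trans_le (hdiv h), ?_,
      fun _ => measurableSet_setOf_measureReal_Iic_lt _⟩, fun x => ?_⟩
  · simp [measureReal_nonneg]
  · simp [measureReal_nonneg.not_gt]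
  have hFM : 0 ≤ μ.real (Iic x) * M := by positivity
  have hle : (⌊μ.real (Iic x) * M⌋₊ : ℝ) / M ≤ μ.real (Iic x) :=
    (div_le_iff₀ hM').2 (Nat.floor_le hFM)
  have hlt : μ.real (Iic x) < (⌊μ.real (Iic x) * M⌋₊ + 1 : ℕ) / M := by
    rw [lt_div_iff₀ hM']
    exact_mod_cast Nat.lt_floor_add_one _
  refine ⟨⌊μ.real (Iic x) * M⌋₊, Nat.floor_le_of_le ?_, fun z hz => hz hle,
    fun y hy => (monotone_measureReal_Iic hy).trans_lt hlt, ?_⟩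
  · exact mul_le_of_le_one_left hM'.le measureReal_le_one
  · calc _ ≤ ((⌊μ.real (Iic x) * M⌋₊ + 1 : ℕ) : ℝ) / M - (⌊μ.real (Iic x) * M⌋₊ : ℝ) / M :=
          sub_le_sub (measureReal_setOf_measureReal_Iic_lt_le (by positivity))
            (le_measureReal_lowerBounds_setOf_le_measureReal_Iic
              (hle.trans measureReal_le_one))
      _ = (M : ℝ)⁻¹ := by push_cast; ring

end HalfLines

section EmpiricalProcess

lemma ae_exists_tendsto_zero_abs_centeredCount_Iic_le {Ω E : Type*} [MeasurableSpace Ω]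
    {P : Measure Ω} [IsProbabilityMeasure P] [MeasurableSpace E] [LinearOrder E] [NoMinOrder E]
    [TopologicalSpace E] [OrderTopology E] [BorelSpace E] {X : ℕ → Ω → E}
    (hX : ∀ i, Measurable (X i)) (hident : ∀ i, P.map (X i) = P.map (X 0))
    [(P.map (X 0)).InnerRegularCompactLTTop] {a : ℕ → ℝ}
    (hα : ∀ i d, 1 ≤ d → AlphaDependenceLE P (X i) (X (i + d)) (a d))
    {b : ℕ → ℝ} (hb : ∀ N, 0 < b N)
    (hsum : Summable fun N : ℕ => (((N : ℝ) + 1) * ((N + 1 : ℕ) + 1)) ^ 2 *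
      (2 ^ N * corrSum a (2 ^ N)) / b N ^ 2) :
    ∀ᵐ ω ∂P, ∃ u : ℕ → ℝ, Tendsto u atTop (𝓝 0) ∧ ∀ N n x, n ≤ 2 ^ N →
      |centeredCount P X (Finset.range n) (Iic x) ω| ≤ u N * b N + 1 := by
  have : IsProbabilityMeasure (P.map (X 0)) := Measure.isProbabilityMeasure_map (hX 0).aemeasurable
  choose G H hG hH hbracket using fun N : ℕ =>
    exists_isMeasurableChain_bracketing_Iic (μ := P.map (X 0)) (Nat.two_pow_pos N)
  filter_upwards [ae_exists_tendsto_zero_abs_centeredCount_le hX hα hG hb hsum,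
    ae_exists_tendsto_zero_abs_centeredCount_le hX hα hH hb hsum] with ω ⟨u, hu, hGu⟩ ⟨v, hv, hHv⟩
  refine ⟨fun N => u N + v N, by simpa using hu.add hv, fun N n x hn => ?_⟩
  obtain ⟨m, hm, hGx, hxH, hgap⟩ := hbracket N x
  have hm' : m + 1 ≤ 2 ^ (N + 1) := by
    have := Nat.one_le_two_pow (n := N)
    omega
  have hmap (i : ℕ) {S : Set E} (hS : MeasurableSet S) :
      P.real (X i ⁻¹' S) = (P.map (X 0)).real S := by
    rw [← hident i, map_measureReal_apply (hX i) hS]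
  have sandwich := abs_centeredCount_le_of_subset (I := Finset.range n)
    (δ := ((2 ^ N : ℕ) : ℝ)⁻¹) hGx hxH (fun i _ => by
      rwa [hmap i ((hH N).measurableSet _), hmap i ((hG N).measurableSet _)]) ω
  have herror : (n : ℝ) * ((2 ^ N : ℕ) : ℝ)⁻¹ ≤ 1 := by
    rw [← div_eq_mul_inv]
    exact div_le_one_of_le₀ (by exact_mod_cast hn) (Nat.cast_nonneg _)
  rw [Finset.card_range] at sandwich
  rw [add_mul]
  linarith [hGu N n m hn (Nat.le_of_succ_le hm'), hHv N n (m + 1) hn hm']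

lemma mul_empDF_sub_distFun {Ω : Type*} [MeasurableSpace Ω] {P : Measure Ω} {X : ℕ → Ω → ℝ}
    (hX : ∀ i, Measurable (X i)) (hident : ∀ i, P.map (X i) = P.map (X 0)) {n : ℕ} (hn : n ≠ 0)
    (ω : Ω) (x : ℝ) :
    n * (empDF X n ω x - distFun P (X 0) x) =
      centeredCount P X (Finset.range n) (Iic x) ω := by
  have hmean (i : ℕ) : P.real (X i ⁻¹' Iic x) = distFun P (X 0) x := by
    rw [← map_measureReal_apply (hX i) measurableSet_Iic, hident i,
      map_measureReal_apply (hX 0) measurableSet_Iic]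
    rfl
  classical
  have hcount : ∑ i ∈ Finset.range n, (X i ⁻¹' Iic x).indicator (1 : Ω → ℝ) ω =
      n * empDF X n ω x := by
    rw [empDF, mul_div_cancel₀ _ (Nat.cast_ne_zero.2 hn), Finset.natCast_card_filter]
    exact Finset.sum_congr rfl fun i _ => by simp [indicator_apply]
  simp only [centeredCount, Finset.sum_sub_distrib, hmean, hcount, Finset.sum_const,
    Finset.card_range, nsmul_eq_mul]
  ring

end EmpiricalProcess

theorem mz_slln_empirical_alpha_mixing_general
    {Ω : Type*} [MeasurableSpace Ω] (P : Measure Ω) [IsProbabilityMeasure P]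
    (X : ℕ → Ω → ℝ) (hmeas : ∀ i, Measurable (X i))
    (hident : ∀ i, Measure.map (X i) P = Measure.map (X 0) P)
    (r K ϑ : ℝ) (hr0 : 0 ≤ r) (hr : r < 1 / 2) (hϑ : 2 * r < ϑ)
    (hα : ∀ i d : ℕ, 1 ≤ d → AlphaDependenceLE P (X i) (X (i + d)) (K * (d : ℝ) ^ (-ϑ))) :
    ∀ᵐ ω ∂P, Tendsto
      (fun n : ℕ => (n : ℝ) ^ r * ⨆ x : ℝ, |empDF X n ω x - distFun P (X 0) x|)
      atTop (𝓝 0) := by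
  have hK : 0 ≤ K := by simpa using (hα 0 1 le_rfl).nonneg
  obtain ⟨θ, hrθ, hθϑ, hθ1⟩ : ∃ θ, 2 * r < θ ∧ θ ≤ ϑ ∧ θ < 1 :=
    ⟨min ϑ (r + 1 / 2), lt_min hϑ (by linarith), min_le_left _ _, min_lt_of_right_lt (by linarith)⟩
  have hαθ (i d : ℕ) (hd : 1 ≤ d) :
      AlphaDependenceLE P (X i) (X (i + d)) (K * (d : ℝ) ^ (-θ)) :=
    (hα i d hd).mono (by gcongr; exact_mod_cast hd)
  filter_upwards [ae_exists_tendsto_zero_abs_centeredCount_Iic_le hmeas hident hαθ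
    (b := fun N => ((2 : ℝ) ^ N) ^ (1 - r)) (fun N => by positivity)
    (summable_sq_mul_two_pow_mul_corrSum_div hK (by linarith) hθ1 hrθ)] with ω ⟨u, hu, hbound⟩
  have hinv : Tendsto (fun N : ℕ => (((2 : ℝ) ^ N) ^ (1 - r))⁻¹) atTop (𝓝 0) :=
    ((tendsto_rpow_atTop (by linarith)).comp
      (tendsto_pow_atTop_atTop_of_one_lt one_lt_two)).inv_tendsto_atTop
  refine (tendsto_rpow_neg_mul_of_dyadic (ρ := 1 - r) (by linarith)
    (s := fun n => ⨆ x, |centeredCount P X (Finset.range n) (Iic x) ω|)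
    (fun n => Real.iSup_nonneg fun x => abs_nonneg _) (by simpa using hu.add hinv)
    fun N n _ hn => ?_).congr' ?_
  · refine ciSup_le fun x => (hbound N n x hn).trans_eq ?_
    field_simp
  · filter_upwards [eventually_ne_atTop 0] with n hn
    simp only [← mul_empDF_sub_distFun hmeas hident hn, abs_mul, Nat.abs_cast]
    rw [← Real.mul_iSup_of_nonneg n.cast_nonneg, ← mul_assoc, neg_sub,
      Real.rpow_sub_one (Nat.cast_ne_zero.2 hn), div_mul_cancel₀ _ (Nat.cast_ne_zero.2 hn)]

/-- **Marcinkiewicz–Zygmund SLLN for empirical distribution functions of α-mixing data.**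
If `(X i)` is identically distributed and α-mixing with `α(n) ≤ K n^{-ϑ}` for some `K > 0`
and `ϑ > 2r`, where `r ∈ [0,1/2)`, then `n^r · sup_x |F̂_n(x) - F(x)| → 0` almost surely. -/
theorem mz_slln_empirical_alpha_mixing
    {Ω : Type*} [MeasurableSpace Ω] (P : Measure Ω) [IsProbabilityMeasure P]
    (X : ℕ → Ω → ℝ) (hmeas : ∀ i, Measurable (X i))
    (hident : ∀ i, Measure.map (X i) P = Measure.map (X 0) P)
    (hmix : Tendsto (alphaCoef P X) atTop (nhds 0))
    (r K ϑ : ℝ) (hr0 : 0 ≤ r) (hr : r < 1 / 2) (hK : 0 < K) (hϑ : 2 * r < ϑ)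
    (hα : ∀ n : ℕ, 1 ≤ n → alphaCoef P X n ≤ K * (n : ℝ) ^ (-ϑ)) :
    ∀ᵐ ω ∂P, Tendsto
      (fun n : ℕ => (n : ℝ) ^ r * ⨆ x : ℝ, |empDF X n ω x - distFun P (X 0) x|)
      atTop (nhds 0) := by
  exact mz_slln_empirical_alpha_mixing_general P X hmeas hident r K ϑ hr0 hr hϑ fun i d hd =>
    (alphaDependenceLE_alphaCoef X i d).mono (hα d hd)
end

section
/- Let (X_i)_{i∈ℕ} be a sequence of identically distributed real random variables with common distribution function F, let φ be a weight function with ∫_{−∞}^{∞} φ dF < ∞, and suppose (X_i) is α-mixing with mixing coefficients (α(n))_{n≥1}; extend α to [0,∞) by α(t) := α(⌊t⌋) for t ≥ 1 and α(t) := 1/4 for t ∈ [0,1). Let G be the distribution function of φ(X_1) and Ḡ := 1 − G. If ∫_0^1 log(1 + α^→(s/2)) · Ḡ^→(s) ds < ∞, then sup_{x∈ℝ} |F̂_n(x) − F(x)|·φ(x) → 0 ℙ-almost surely as n → ∞. -/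
open MeasureTheory Filter Set

/-- A weight function: continuous, bounded away from 0, and u-shaped. -/
def IsWeightFun (φ : ℝ → ℝ) : Prop :=
  Continuous φ ∧ (∃ ε > 0, ∀ x, ε ≤ φ x) ∧
    ∃ x₀ : ℝ, (∀ x y, x ≤ y → y ≤ x₀ → φ y ≤ φ x) ∧ ∀ x y, x₀ ≤ x → x ≤ y → φ x ≤ φ y

/-- Càdlàg extension of mixing coefficients, equal to `1/4` on `[0,1)`
and to `α ⌊t⌋` for `t ≥ 1`. -/
noncomputable def alphaExt (α : ℕ → ℝ) (t : ℝ) : ℝ :=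
  if t < 1 then 1 / 4 else α ⌊t⌋₊

/-- Right-continuous inverse of a nonincreasing function on `[0,∞)`, with `sup ∅ = 0`. -/
noncomputable def rcInv (h : ℝ → ℝ) (y : ℝ) : ℝ :=
  sSup { x : ℝ | 0 ≤ x ∧ y < h x }

/-!
Let `Q` be the quantile function of `φ (X 0)` on `(0, 1)` and `A u = 1 + α^→ (u / 2)`. For
measurable `0 ≤ f ≤ φ` the variables `f (X i)` obey the strong law. Since their partial sums are
monotone, it suffices to prove convergence along `N = ⌊c ^ k⌋` for every `c > 1`. At such a time,
take a block length `r` that balances mixing against tails and truncate at `N / r`. Rio's covariance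
inequality then bounds the mean of a pseudo-Huber function of the normalized centred truncated sum,
and the quantile coupling bounds the mean of the excess, both by a multiple of
`∫ min Q N (A Q² / N) / N`. Summed over a geometric sequence of `N` this gives
`∫ Q (1 + log A) < ∞`, and Borel–Cantelli applies.

Uniformity in `x` is a Glivenko–Cantelli argument. In the tails, where `φ` is monotone, Markov's
inequality and the strong law for `φ` restricted to a tail bound the weighted error. On a compact
interval `φ` is bounded, and near each point the empirical distribution function is squeezed between
two relative frequencies.
-/

section GeometricSums

variable {c : ℝ}

/-- Upper bound for the contribution of one unit of probability mass, carrying the value `q` of the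
dominating quantile function and the dependence range `A`, to every error made at sample size
`N`. -/
noncomputable def sampleError (A q N : ℝ) : ℝ :=
  min q (min N (A * q ^ 2 / N))

lemma sampleError_nonneg {A q N : ℝ} (hA : 0 ≤ A) (hq : 0 ≤ q) (hN : 0 ≤ N) :
    0 ≤ sampleError A q N :=
  le_min hq (le_min hN (by positivity))

lemma sum_geom_small_le (hc : 1 < c) {q : ℝ} (hq : 0 ≤ q) (K : ℕ) :
    ∑ k ∈ Finset.range K, (if c ^ k ≤ q then c ^ k else 0) ≤ c / (c - 1) * q := by
  have hc' : 0 < c - 1 := sub_pos.2 hc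
  have hpow (k : ℕ) : 0 < c ^ k := by positivity
  let V (k : ℕ) : ℝ := min (c ^ k) (c * q) / (c - 1)
  calc ∑ k ∈ Finset.range K, (if c ^ k ≤ q then c ^ k else 0)
      ≤ ∑ k ∈ Finset.range K, (V (k + 1) - V k) := by
        refine Finset.sum_le_sum fun k _ => ?_
        rw [← sub_div, le_div_iff₀ hc', pow_succ]
        have hk := hpow k
        split_ifs with h
        · rw [min_eq_left (by nlinarith), min_eq_left (by nlinarith)]
          linarith
        · have : min (c ^ k) (c * q) ≤ min (c ^ k * c) (c * q) := min_le_min_right _ (by nlinarith)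
          linarith
    _ = V K - V 0 := Finset.sum_range_sub V K
    _ ≤ c * q / (c - 1) := by
        have : 0 ≤ V 0 := div_nonneg (le_min (hpow 0).le (by positivity)) hc'.le
        have : V K ≤ c * q / (c - 1) := div_le_div_of_nonneg_right (min_le_right _ _) hc'.le
        linarith
    _ = c / (c - 1) * q := by ring

lemma card_geom_mem_Ioc_le (hc : 1 < c) {a b : ℝ} (ha : 0 < a) (hab : a ≤ b) (K : ℕ) :
    ∑ k ∈ Finset.range K, (if a < c ^ k ∧ c ^ k ≤ b then (1 : ℝ) else 0)
      ≤ 1 + Real.log (b / a) / Real.log c := by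
  have hl : 0 < Real.log c := Real.log_pos hc
  have hlab : Real.log a ≤ Real.log b := Real.log_le_log ha hab
  let V (k : ℕ) : ℝ := max (Real.log a) (min (k * Real.log c) (Real.log b + Real.log c))
  have hV (k : ℕ) : V k ≤ V (k + 1) := by
    refine max_le_max_left _ (min_le_min_right _ ?_)
    gcongr
    simp
  calc ∑ k ∈ Finset.range K, (if a < c ^ k ∧ c ^ k ≤ b then (1 : ℝ) else 0)
      ≤ ∑ k ∈ Finset.range K, (V (k + 1) - V k) / Real.log c := by
        refine Finset.sum_le_sum fun k _ => ?_
        rw [le_div_iff₀ hl]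
        split_ifs with h
        · have h₁ : Real.log a < k * Real.log c := by simpa using Real.log_lt_log ha h.1
          have h₂ : k * Real.log c ≤ Real.log b := by
            simpa using Real.log_le_log (by positivity) h.2
          have hk : V k ≤ k * Real.log c := max_le h₁.le (min_le_left _ _)
          have hk' : (k + 1) * Real.log c ≤ V (k + 1) :=
            le_max_of_le_right (le_min (by push_cast; rfl) (by linarith))
          linarith
        · linarith [hV k]
    _ = (V K - V 0) / Real.log c := by rw [← Finset.sum_div, Finset.sum_range_sub]
    _ ≤ (Real.log b + Real.log c - Real.log a) / Real.log c := by
        have : V K ≤ Real.log b + Real.log c := max_le (by linarith) (min_le_right _ _)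
        have : Real.log a ≤ V 0 := le_max_left _ _
        gcongr
    _ = 1 + Real.log (b / a) / Real.log c := by
        rw [Real.log_div (ha.trans_le hab).ne' ha.ne']
        field_simp
        ring

lemma sum_geom_large_le (hc : 1 < c) {b : ℝ} (hb : 0 ≤ b) (K : ℕ) :
    ∑ k ∈ Finset.range K, (if b < c ^ k then b / c ^ k else 0) ≤ c / (c - 1) := by
  have hc' : 0 < c - 1 := sub_pos.2 hc
  have hpow (k : ℕ) : 0 < c ^ k := by positivity
  let V (k : ℕ) : ℝ := min 1 (b / c ^ k)
  have hV (k : ℕ) : V (k + 1) ≤ V k := by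
    refine min_le_min_left _ ?_
    gcongr
    exacts [hc.le, k.le_succ]
  calc ∑ k ∈ Finset.range K, (if b < c ^ k then b / c ^ k else 0)
      ≤ ∑ k ∈ Finset.range K, (V k - V (k + 1)) * (c / (c - 1)) := by
        refine Finset.sum_le_sum fun k _ => ?_
        split_ifs with h
        · have hk : V k = b / c ^ k := min_eq_right ((div_le_one (hpow k)).2 h.le)
          have hk' : V (k + 1) ≤ b / c ^ (k + 1) := min_le_right _ _
          calc b / c ^ k = (b / c ^ k - b / c ^ (k + 1)) * (c / (c - 1)) := by
                rw [pow_succ]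
                field_simp
            _ ≤ (V k - V (k + 1)) * (c / (c - 1)) := by gcongr; exact hk.ge
        · exact mul_nonneg (sub_nonneg.2 (hV k)) (by positivity)
    _ = (V 0 - V K) * (c / (c - 1)) := by rw [← Finset.sum_mul, Finset.sum_range_sub']
    _ ≤ 1 * (c / (c - 1)) := by
        have : V 0 ≤ 1 := min_le_left _ _
        have : 0 ≤ V K := le_min zero_le_one (div_nonneg hb (hpow K).le)
        gcongr
        linarith
    _ = c / (c - 1) := one_mul _

lemma sampleError_floor_le {A q x : ℝ} (hA : 1 ≤ A) (hq : 0 < q) (hx : 1 ≤ x) :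
    sampleError A q ⌊x⌋₊ ≤ (if x ≤ q then x else 0) + q * (if q < x ∧ x ≤ A * q then 1 else 0)
      + 2 * q * (if A * q < x then A * q / x else 0) := by
  have hqA : q ≤ A * q := le_mul_of_one_le_left hq.le hA
  rcases le_or_gt x q with h | h
  · simp only [if_pos h, h.not_gt, false_and, if_false, (h.trans hqA).not_gt, mul_zero, add_zero]
    exact (min_le_right _ _).trans ((min_le_left _ _).trans (Nat.floor_le (by linarith)))
  rcases le_or_gt x (A * q) with h' | h'
  · simp only [h.not_ge, h, h', h'.not_gt, if_false, if_true, and_self]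
    linarith [min_le_left q (min (⌊x⌋₊ : ℝ) (A * q ^ 2 / ⌊x⌋₊)), sampleError.eq_1 A q ⌊x⌋₊]
  · simp only [h.not_ge, h', h'.not_ge, if_false, if_true, and_false, mul_zero, zero_add]
    calc sampleError A q ⌊x⌋₊ ≤ A * q ^ 2 / ⌊x⌋₊ := (min_le_right _ _).trans (min_le_right _ _)
      _ ≤ A * q ^ 2 / (x / 2) := by
          have : 0 < x / 2 := by linarith
          gcongr
          linarith [Nat.lt_floor_add_one x, (Nat.one_le_cast (α := ℝ)).2 (Nat.floor_pos.2 hx)]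
      _ = 2 * q * (A * q / x) := by ring

lemma exists_sum_sampleError_geom_le (hc : 1 < c) :
    ∃ C : ℝ, ∀ A q : ℝ, 1 ≤ A → 0 < q → ∀ K : ℕ,
      ∑ k ∈ Finset.range K, sampleError A q ⌊c ^ k⌋₊ ≤ C * (q * (1 + Real.log A)) := by
  have hl : 0 < Real.log c := Real.log_pos hc
  have hratio : 0 ≤ c / (c - 1) := div_nonneg (by linarith) (sub_pos.2 hc).le
  refine ⟨3 * (c / (c - 1)) + 1 + 1 / Real.log c, fun A q hA hq K => ?_⟩
  have hlA : 0 ≤ Real.log A := Real.log_nonneg hA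
  have hmid := card_geom_mem_Ioc_le hc hq (le_mul_of_one_le_left hq.le hA) K
  rw [mul_div_cancel_right₀ A hq.ne'] at hmid
  calc ∑ k ∈ Finset.range K, sampleError A q ⌊c ^ k⌋₊
      ≤ c / (c - 1) * q + q * (1 + Real.log A / Real.log c) + 2 * q * (c / (c - 1)) := by
        refine (Finset.sum_le_sum fun k _ =>
          sampleError_floor_le hA hq (one_le_pow₀ hc.le)).trans ?_
        rw [Finset.sum_add_distrib, Finset.sum_add_distrib, ← Finset.mul_sum, ← Finset.mul_sum]
        gcongr
        · exact sum_geom_small_le hc hq.le K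
        · exact sum_geom_large_le hc (by positivity) K
    _ = q * (3 * (c / (c - 1)) + 1 + 1 / Real.log c * Real.log A) := by ring
    _ ≤ q * ((3 * (c / (c - 1)) + 1 + 1 / Real.log c) * (1 + Real.log A)) := by
        have : 0 ≤ (3 * (c / (c - 1)) + 1) * Real.log A := mul_nonneg (by linarith) hlA
        have : 0 ≤ 1 / Real.log c := by positivity
        gcongr
        linarith
    _ = (3 * (c / (c - 1)) + 1 + 1 / Real.log c) * (q * (1 + Real.log A)) := by ring

end GeometricSums

section PseudoHuber

/-- The pseudo-Huber function: quadratic near the origin, of linear growth at infinity. -/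
noncomputable def pseudoHuber (x : ℝ) : ℝ := √(1 + x ^ 2) - 1

/-- The derivative of `pseudoHuber`, a monotone `1`-Lipschitz function with values in `[-1, 1]`. -/
noncomputable def pseudoHuberSlope (x : ℝ) : ℝ := x / √(1 + x ^ 2)

lemma one_le_sqrt_one_add_sq (x : ℝ) : 1 ≤ √(1 + x ^ 2) :=
  Real.one_le_sqrt.2 (by nlinarith [sq_nonneg x])

lemma pseudoHuber_nonneg (x : ℝ) : 0 ≤ pseudoHuber x :=
  sub_nonneg.2 (one_le_sqrt_one_add_sq x)

lemma pseudoHuber_le_abs (x : ℝ) : pseudoHuber x ≤ |x| := by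
  rw [pseudoHuber, sub_le_iff_le_add', Real.sqrt_le_iff]
  exact ⟨by positivity, by nlinarith [abs_nonneg x, sq_abs x]⟩

lemma continuous_pseudoHuber : Continuous pseudoHuber := by
  unfold pseudoHuber
  fun_prop

lemma abs_pseudoHuberSlope_le_one (x : ℝ) : |pseudoHuberSlope x| ≤ 1 := by
  rw [pseudoHuberSlope, abs_div, abs_of_nonneg (Real.sqrt_nonneg _)]
  refine div_le_one_of_le₀ (Real.abs_le_sqrt ?_) (Real.sqrt_nonneg _)
  linarith

lemma hasDerivAt_pseudoHuberSlope (x : ℝ) :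
    HasDerivAt pseudoHuberSlope ((√(1 + x ^ 2) ^ 3)⁻¹) x := by
  have hpos : 0 < 1 + x ^ 2 := by positivity
  have hs : √(1 + x ^ 2) ^ 2 = 1 + x ^ 2 := Real.sq_sqrt hpos.le
  have hsqrt : HasDerivAt (fun y : ℝ => √(1 + y ^ 2)) (x / √(1 + x ^ 2)) x := by
    convert ((hasDerivAt_pow 2 x).const_add 1).sqrt hpos.ne' using 1
    simp only [Nat.cast_ofNat, Nat.add_one_sub_one, pow_one]
    ring
  refine ((hasDerivAt_id x).div hsqrt (Real.sqrt_pos.2 hpos).ne').congr_deriv ?_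
  have : √(1 + x ^ 2) ≠ 0 := (Real.sqrt_pos.2 hpos).ne'
  simp only [id]
  field_simp
  rw [hs]
  ring

lemma monotone_pseudoHuberSlope : Monotone pseudoHuberSlope :=
  monotone_of_hasDerivAt_nonneg hasDerivAt_pseudoHuberSlope fun x => by positivity

lemma lipschitzWith_pseudoHuberSlope : LipschitzWith 1 pseudoHuberSlope := by
  refine lipschitzWith_of_nnnorm_deriv_le
    (fun x => (hasDerivAt_pseudoHuberSlope x).differentiableAt) fun x => ?_
  rw [(hasDerivAt_pseudoHuberSlope x).deriv, ← NNReal.coe_le_coe, coe_nnnorm, NNReal.coe_one,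
    Real.norm_of_nonneg (by positivity)]
  exact inv_le_one_of_one_le₀ (one_le_pow₀ (one_le_sqrt_one_add_sq x))

-- AM-GM bounds the square root by its tangent at `1 + x ^ 2`.
lemma pseudoHuber_add_le (x h : ℝ) :
    pseudoHuber (x + h) ≤ pseudoHuber x + pseudoHuberSlope x * h + h ^ 2 / 2 := by
  have hs : 1 ≤ √(1 + x ^ 2) := one_le_sqrt_one_add_sq x
  have hs' : √(1 + x ^ 2) ^ 2 = 1 + x ^ 2 := Real.sq_sqrt (by positivity)
  have ht' : √(1 + (x + h) ^ 2) ^ 2 = 1 + (x + h) ^ 2 := Real.sq_sqrt (by positivity)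
  have htangent : √(1 + (x + h) ^ 2) ≤ √(1 + x ^ 2) + (2 * x * h + h ^ 2) / (2 * √(1 + x ^ 2)) := by
    rw [← sub_le_iff_le_add', le_div_iff₀ (by positivity)]
    nlinarith [sq_nonneg (√(1 + (x + h) ^ 2) - √(1 + x ^ 2))]
  have hquad : h ^ 2 / (2 * √(1 + x ^ 2)) ≤ h ^ 2 / 2 := by
    gcongr
    linarith
  have : (2 * x * h + h ^ 2) / (2 * √(1 + x ^ 2))
      = x / √(1 + x ^ 2) * h + h ^ 2 / (2 * √(1 + x ^ 2)) := by
    field_simp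
  unfold pseudoHuber pseudoHuberSlope
  linarith

lemma tendsto_zero_of_pseudoHuber {ι : Type*} {l : Filter ι} {u : ι → ℝ}
    (h : Tendsto (fun i => pseudoHuber (u i)) l (nhds 0)) : Tendsto u l (nhds 0) := by
  have hsq (x : ℝ) : x ^ 2 = pseudoHuber x ^ 2 + 2 * pseudoHuber x := by
    have : √(1 + x ^ 2) ^ 2 = 1 + x ^ 2 := Real.sq_sqrt (by positivity)
    unfold pseudoHuber
    linarith
  have hlim : Tendsto (fun i => √(u i ^ 2)) l (nhds √(0 ^ 2 + 2 * 0)) := by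
    simp_rw [fun i => hsq (u i)]
    exact ((h.pow 2).add (h.const_mul 2)).sqrt
  simp only [Real.sqrt_sq_eq_abs] at hlim
  exact (tendsto_zero_iff_abs_tendsto_zero u).2 (by simpa [Function.comp_def] using hlim)

end PseudoHuber

section Uniform

/-- The uniform distribution on `(0, 1)`, the common law under which quantile functions are viewed
as random variables. -/
noncomputable def uniform01 : Measure ℝ := volume.restrict (Ioo 0 1)

instance : IsProbabilityMeasure uniform01 := ⟨by simp [uniform01]⟩

lemma ae_mem_Ioo_uniform01 : ∀ᵐ u ∂uniform01, u ∈ Ioo (0 : ℝ) 1 :=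
  ae_restrict_mem measurableSet_Ioo

lemma uniform01_real_Iio (x : ℝ) : uniform01.real (Iio x) = max 0 (min x 1) := by
  have : Iio x ∩ Ioo 0 1 = Ioo 0 (min x 1) := by
    ext u
    simp only [mem_inter_iff, mem_Iio, mem_Ioo, lt_min_iff]
    tauto
  rw [uniform01, measureReal_restrict_apply measurableSet_Iio, this, measureReal_def,
    Real.volume_Ioo, ENNReal.toReal_ofReal', sub_zero, max_comm]

lemma aemeasurable_uniform01_of_antitoneOn {Q : ℝ → ℝ} (hQ : AntitoneOn Q (Ioo 0 1)) :
    AEMeasurable Q uniform01 :=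
  aemeasurable_restrict_of_antitoneOn measurableSet_Ioo hQ

lemma isLowerSet_lt_of_antitoneOn {Q : ℝ → ℝ} (hQ : AntitoneOn Q (Ioo 0 1)) (t : ℝ) :
    IsLowerSet ((↑) ⁻¹' {u | t < Q u} : Set (Ioo (0 : ℝ) 1)) :=
  fun u v hvu hu => hu.out.trans_le (hQ v.2 u.2 hvu)

lemma isLowerSet_Iio_Ioo (x : ℝ) : IsLowerSet ((↑) ⁻¹' Iio x : Set (Ioo (0 : ℝ) 1)) :=
  fun _ _ hvu hu => lt_of_le_of_lt (Subtype.coe_le_coe.2 hvu) hu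

lemma uniform01_real_inter {I J : Set ℝ} (hI : IsLowerSet ((↑) ⁻¹' I : Set (Ioo (0 : ℝ) 1)))
    (hJ : IsLowerSet ((↑) ⁻¹' J : Set (Ioo (0 : ℝ) 1))) :
    uniform01.real (I ∩ J) = min (uniform01.real I) (uniform01.real J) := by
  have key {S T : Set ℝ} (h : ((↑) ⁻¹' S : Set (Ioo (0 : ℝ) 1)) ⊆ (↑) ⁻¹' T) :
      uniform01.real (S ∩ T) = min (uniform01.real S) (uniform01.real T) := by
    have hle : (S ∩ T : Set ℝ) =ᵐ[uniform01] S := by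
      filter_upwards [ae_mem_Ioo_uniform01] with u hu
      exact propext (and_iff_left_of_imp fun hS => @h ⟨u, hu⟩ hS)
    have hST : uniform01.real S ≤ uniform01.real T :=
      measureReal_congr hle ▸ measureReal_mono inter_subset_right
    rw [measureReal_congr hle, min_eq_left hST]
  rcases hI.total hJ with h | h
  · exact key h
  · rw [inter_comm, min_comm, key h]

end Uniform

section Quantile

open ProbabilityTheory

variable {h : ℝ → ℝ} {x y t : ℝ}

lemma bddAbove_superlevel (hlim : Tendsto h atTop (nhds 0)) (hy : 0 < y) :
    BddAbove {x : ℝ | 0 ≤ x ∧ y < h x} := by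
  obtain ⟨b, hb⟩ := eventually_atTop.1 (hlim.eventually_lt_const hy)
  exact ⟨b, fun x hx => le_of_not_gt fun hbx => (hb x hbx.le).not_gt hx.2⟩

lemma rcInv_nonneg (h : ℝ → ℝ) (y : ℝ) : 0 ≤ rcInv h y :=
  Real.sSup_nonneg fun _ hx => hx.1

lemma le_rcInv (hlim : Tendsto h atTop (nhds 0)) (hy : 0 < y) (hx : 0 ≤ x) (hxy : y < h x) :
    x ≤ rcInv h y :=
  le_csSup (bddAbove_superlevel hlim hy) ⟨hx, hxy⟩

lemma antitoneOn_rcInv (hlim : Tendsto h atTop (nhds 0)) : AntitoneOn (rcInv h) (Ioi 0) :=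
  fun _ hy _ _ hyz => Real.sSup_le
    (fun _ hx => le_rcInv hlim hy hx.1 (hyz.trans_lt hx.2)) (rcInv_nonneg h _)

lemma lt_rcInv_iff (hanti : Antitone h) (hright : ContinuousWithinAt h (Ici t) t)
    (hlim : Tendsto h atTop (nhds 0)) (ht : 0 ≤ t) (hy : 0 < y) :
    t < rcInv h y ↔ y < h t := by
  refine ⟨fun hlt => ?_, fun hlt => ?_⟩
  · have hne : {x : ℝ | 0 ≤ x ∧ y < h x}.Nonempty := by
      by_contra hempty
      rw [rcInv, not_nonempty_iff_eq_empty.1 hempty, Real.sSup_empty] at hlt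
      exact hlt.not_ge ht
    obtain ⟨x, hx, htx⟩ := exists_lt_of_lt_csSup hne hlt
    exact hx.2.trans_le (hanti htx.le)
  · have hev : ∀ᶠ x in nhdsWithin t (Ioi t), y < h x :=
      (hright.mono Ioi_subset_Ici_self).eventually_const_lt hlt
    obtain ⟨x, hx, htx⟩ := (hev.and self_mem_nhdsWithin).exists
    exact htx.trans_le (le_rcInv hlim hy (ht.trans htx.le) hx)

variable {Ω : Type*} [MeasurableSpace Ω] {P : Measure Ω} [IsProbabilityMeasure P] {Y : Ω → ℝ}

/-- The upper quantile function `Ḡ^→` of `Y`, where `Ḡ` is the survival function of `Y`. It is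
a quantile function in the usual sense only if `Y` is nonnegative. -/
noncomputable def tailQuantile (P : Measure Ω) (Y : Ω → ℝ) : ℝ → ℝ :=
  rcInv fun x => 1 - distFun P Y x

lemma one_sub_distFun (hY : Measurable Y) (x : ℝ) :
    1 - distFun P Y x = P.real {ω | x < Y ω} := by
  rw [distFun, ← measureReal_def,
    ← probReal_compl_eq_one_sub (measurableSet_le hY measurable_const)]
  simp only [compl_ofPred, not_le]

lemma distFun_eq_cdf (hY : Measurable Y) : distFun P Y = cdf (P.map Y) := by
  have := Measure.isProbabilityMeasure_map (μ := P) hY.aemeasurable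
  ext x
  rw [cdf_eq_real, map_measureReal_apply hY measurableSet_Iic]
  rfl

lemma tendsto_one_sub_distFun_atTop (hY : Measurable Y) :
    Tendsto (fun x => 1 - distFun P Y x) atTop (nhds 0) := by
  simpa [distFun_eq_cdf hY] using (tendsto_cdf_atTop (P.map Y)).const_sub 1

lemma antitoneOn_tailQuantile (hY : Measurable Y) : AntitoneOn (tailQuantile P Y) (Ioo 0 1) :=
  (antitoneOn_rcInv (tendsto_one_sub_distFun_atTop hY)).mono Ioo_subset_Ioi_self

lemma lt_tailQuantile_iff (hY : Measurable Y) (ht : 0 ≤ t) (hy : 0 < y) :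
    t < tailQuantile P Y y ↔ y < P.real {ω | t < Y ω} := by
  rw [← one_sub_distFun hY]
  refine lt_rcInv_iff (fun a b hab => ?_) ?_ (tendsto_one_sub_distFun_atTop hY) ht hy
  · simp only [distFun_eq_cdf hY]
    exact sub_le_sub_left (monotone_cdf (P.map Y) hab) 1
  · simp only [distFun_eq_cdf hY]
    exact continuousWithinAt_const.sub ((cdf (P.map Y)).right_continuous t)

lemma le_tailQuantile (hY : Measurable Y) {ε : ℝ} (hε : ∀ ω, ε ≤ Y ω) (hy : y ∈ Ioo (0 : ℝ) 1) :
    ε ≤ tailQuantile P Y y := by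
  by_contra! hlt
  have hone : P.real {ω | tailQuantile P Y y < Y ω} = 1 := by
    simp [hlt.trans_le (hε _)]
  exact lt_irrefl _ ((lt_tailQuantile_iff hY (rcInv_nonneg _ y) hy.1).2 (hone ▸ hy.2))

lemma identDistrib_tailQuantile (hY : Measurable Y) (hY0 : ∀ ω, 0 ≤ Y ω) :
    IdentDistrib Y (tailQuantile P Y) P uniform01 := by
  have hQ := aemeasurable_uniform01_of_antitoneOn (antitoneOn_tailQuantile (P := P) hY)
  have := Measure.isProbabilityMeasure_map (μ := P) hY.aemeasurable
  have := Measure.isProbabilityMeasure_map hQ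
  have hIoi (t : ℝ) : (P.map Y).real (Ioi t) = (uniform01.map (tailQuantile P Y)).real (Ioi t) := by
    rw [map_measureReal_apply hY measurableSet_Ioi,
      map_measureReal_apply_of_aemeasurable hQ measurableSet_Ioi]
    rcases lt_or_ge t 0 with ht | ht
    · have hleft : Y ⁻¹' Ioi t = univ := by ext ω; simp [ht.trans_le (hY0 ω)]
      have hright : tailQuantile P Y ⁻¹' Ioi t = univ := by
        ext u
        simp [tailQuantile, ht.trans_le (rcInv_nonneg _ u)]
      rw [hleft, hright, probReal_univ, probReal_univ]
    · have hae : tailQuantile P Y ⁻¹' Ioi t =ᵐ[uniform01] Iio (P.real {ω | t < Y ω}) := by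
        filter_upwards [ae_mem_Ioo_uniform01] with u hu
        exact propext (lt_tailQuantile_iff hY ht hu.1)
      rw [measureReal_congr hae, uniform01_real_Iio, min_eq_left measureReal_le_one,
        max_eq_right measureReal_nonneg]
      rfl
  refine ⟨hY.aemeasurable, hQ, Measure.ext_of_Iic _ _ fun t => ?_⟩
  rw [← measureReal_eq_measureReal_iff, ← compl_Ioi, probReal_compl_eq_one_sub measurableSet_Ioi,
    probReal_compl_eq_one_sub measurableSet_Ioi, hIoi]

end Quantile

section StochasticDomination

open ProbabilityTheory

variable {Ω : Type*} [MeasurableSpace Ω] {P : Measure Ω} {Y : Ω → ℝ} {Q : ℝ → ℝ}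

/-- The random variable `Y` is stochastically dominated by the quantile function `Q`. This is
encoded by a coupling, a pointwise upper bound of `Y` with the law of `Q`. -/
def StochLE (P : Measure Ω) (Y : Ω → ℝ) (Q : ℝ → ℝ) : Prop :=
  ∃ W : Ω → ℝ, (∀ ω, Y ω ≤ W ω) ∧ IdentDistrib W Q P uniform01

lemma StochLE.mono {Y' : Ω → ℝ} (h : StochLE P Y Q) (hY : ∀ ω, Y' ω ≤ Y ω) : StochLE P Y' Q := by
  obtain ⟨W, hYW, hW⟩ := h
  exact ⟨W, fun ω => (hY ω).trans (hYW ω), hW⟩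

lemma StochLE.comp {g : ℝ → ℝ} (h : StochLE P Y Q) (hg : Monotone g) :
    StochLE P (fun ω => g (Y ω)) fun u => g (Q u) := by
  obtain ⟨W, hYW, hW⟩ := h
  exact ⟨g ∘ W, fun ω => hg (hYW ω), hW.comp hg.measurable⟩

lemma stochLE_const [IsProbabilityMeasure P] {C : ℝ} (hY : ∀ ω, Y ω ≤ C) :
    StochLE P Y fun _ => C :=
  ⟨fun _ => C, hY, aemeasurable_const, aemeasurable_const, by
    rw [Measure.map_const, Measure.map_const, measure_univ, measure_univ]⟩

lemma StochLE.measure_lt_le (h : StochLE P Y Q) (t : ℝ) :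
    P {ω | t < Y ω} ≤ uniform01 {u | t < Q u} := by
  obtain ⟨W, hYW, hW⟩ := h
  calc P {ω | t < Y ω} ≤ P (W ⁻¹' Ioi t) := measure_mono fun ω hω => hω.out.trans_le (hYW ω)
    _ = uniform01 {u | t < Q u} := hW.measure_mem_eq measurableSet_Ioi

lemma StochLE.integral_le (h : StochLE P Y Q) (hY : ∀ ω, 0 ≤ Y ω) (hQ : Integrable Q uniform01) :
    ∫ ω, Y ω ∂P ≤ ∫ u, Q u ∂uniform01 := by
  obtain ⟨W, hYW, hW⟩ := h
  exact hW.integral_eq ▸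
    integral_mono_of_nonneg (ae_of_all _ hY) (hW.integrable_iff.2 hQ) (ae_of_all _ hYW)

lemma StochLE.integrable (h : StochLE P Y Q) (hYm : Measurable Y) (hY : ∀ ω, 0 ≤ Y ω)
    (hQ : Integrable Q uniform01) : Integrable Y P := by
  obtain ⟨W, hYW, hW⟩ := h
  refine (hW.integrable_iff.2 hQ).mono' hYm.aestronglyMeasurable (ae_of_all _ fun ω => ?_)
  rw [Real.norm_of_nonneg (hY ω)]
  exact hYW ω

lemma StochLE.ae_le (h : StochLE P Y Q) {C : ℝ} (hQ : ∀ᵐ u ∂uniform01, Q u ≤ C) :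
    ∀ᵐ ω ∂P, Y ω ≤ C := by
  simp only [ae_iff, not_le] at hQ ⊢
  exact le_antisymm ((h.measure_lt_le C).trans hQ.le) bot_le

lemma StochLE.memLp [IsProbabilityMeasure P] (h : StochLE P Y Q) (hYm : Measurable Y)
    (hY : ∀ ω, 0 ≤ Y ω) {C : ℝ} (hQ : ∀ᵐ u ∂uniform01, Q u ≤ C) (p : ENNReal) : MemLp Y p P :=
  memLp_of_bounded ((h.ae_le hQ).mono fun ω hω => ⟨hY ω, hω⟩) hYm.aestronglyMeasurable p

end StochasticDomination

section CovarianceInequality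

open ProbabilityTheory

lemma lintegral_ofReal_mul_eq_lintegral_meas_inter {α : Type*} [MeasurableSpace α] {ν : Measure α}
    [SFinite ν] {U V : α → ℝ} (hU : AEMeasurable U ν) (hV : AEMeasurable V ν)
    (hU0 : 0 ≤ᵐ[ν] U) (hV0 : 0 ≤ᵐ[ν] V) :
    ∫⁻ x, ENNReal.ofReal (U x) * ENNReal.ofReal (V x) ∂ν
      = ∫⁻ s in Ioi 0, ∫⁻ t in Ioi 0, ν ({x | s < U x} ∩ {x | t < V x}) := by
  have hac := withDensity_absolutelyContinuous ν fun x => ENNReal.ofReal (V x)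
  calc ∫⁻ x, ENNReal.ofReal (U x) * ENNReal.ofReal (V x) ∂ν
      = ∫⁻ x, ENNReal.ofReal (U x) ∂ν.withDensity fun x => ENNReal.ofReal (V x) := by
        rw [lintegral_withDensity_eq_lintegral_mul₀ hV.ennreal_ofReal hU.ennreal_ofReal]
        simp only [Pi.mul_apply, mul_comm]
    _ = ∫⁻ s in Ioi 0, (ν.withDensity fun x => ENNReal.ofReal (V x)) {x | s < U x} :=
        lintegral_eq_lintegral_meas_lt _ (hac.ae_le hU0) (hU.mono_ac hac)
    _ = ∫⁻ s in Ioi 0, ∫⁻ t in Ioi 0, ν ({x | s < U x} ∩ {x | t < V x}) := by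
        refine lintegral_congr fun s => ?_
        rw [withDensity_apply',
          lintegral_eq_lintegral_meas_lt _ (ae_restrict_of_ae hV0) hV.restrict]
        refine lintegral_congr fun t => ?_
        rw [Measure.restrict_apply₀' (nullMeasurableSet_lt aemeasurable_const hU), inter_comm]

variable {Ω : Type*} [MeasurableSpace Ω] {P : Measure Ω} [IsProbabilityMeasure P]
  {U V : Ω → ℝ} {a b : ℝ → ℝ} {c : ℝ}

lemma measureReal_inter_le_of_stochLE (hUa : StochLE P U a) (hVb : StochLE P V b)
    (ha : AntitoneOn a (Ioo 0 1)) (hb : AntitoneOn b (Ioo 0 1)) {s t : ℝ}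
    (hmix : P.real ({ω | s < U ω} ∩ {ω | t < V ω})
      ≤ P.real {ω | s < U ω} * P.real {ω | t < V ω} + c) :
    P.real ({ω | s < U ω} ∩ {ω | t < V ω}) ≤ P.real {ω | s < U ω} * P.real {ω | t < V ω}
      + (uniform01.restrict (Iio c)).real ({u | s < a u} ∩ {u | t < b u}) := by
  have hI := isLowerSet_lt_of_antitoneOn ha s
  have hJ := isLowerSet_lt_of_antitoneOn hb t
  have hIJ : IsLowerSet ((↑) ⁻¹' ({u | s < a u} ∩ {u | t < b u}) : Set (Ioo (0 : ℝ) 1)) :=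
    hI.inter hJ
  have hPI : P.real {ω | s < U ω} ≤ uniform01.real {u | s < a u} :=
    ENNReal.toReal_mono (measure_ne_top _ _) (hUa.measure_lt_le s)
  have hPJ : P.real {ω | t < V ω} ≤ uniform01.real {u | t < b u} :=
    ENNReal.toReal_mono (measure_ne_top _ _) (hVb.measure_lt_le t)
  have hleI : P.real ({ω | s < U ω} ∩ {ω | t < V ω}) ≤ P.real {ω | s < U ω} :=
    measureReal_mono inter_subset_left
  have hleJ : P.real ({ω | s < U ω} ∩ {ω | t < V ω}) ≤ P.real {ω | t < V ω} :=
    measureReal_mono inter_subset_right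
  have hprod : 0 ≤ P.real {ω | s < U ω} * P.real {ω | t < V ω} := by positivity
  have hone : P.real ({ω | s < U ω} ∩ {ω | t < V ω}) ≤ 1 := measureReal_le_one
  rw [measureReal_restrict_apply' measurableSet_Iio,
    uniform01_real_inter hIJ (isLowerSet_Iio_Ioo c), uniform01_real_inter hI hJ,
    uniform01_real_Iio, ← sub_le_iff_le_add']
  exact le_min (le_min (by linarith) (by linarith))
    (le_max_of_le_right (le_min (by linarith) (by linarith)))

lemma lintegral_mul_le_of_stochLE (hU : Measurable U) (hV : Measurable V)
    (hU0 : ∀ ω, 0 ≤ U ω) (hV0 : ∀ ω, 0 ≤ V ω) (hUa : StochLE P U a) (hVb : StochLE P V b)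
    (ha : AntitoneOn a (Ioo 0 1)) (hb : AntitoneOn b (Ioo 0 1))
    (ha0 : ∀ u ∈ Ioo 0 1, 0 ≤ a u) (hb0 : ∀ u ∈ Ioo 0 1, 0 ≤ b u)
    (hmix : ∀ s t, P.real ({ω | s < U ω} ∩ {ω | t < V ω})
      ≤ P.real {ω | s < U ω} * P.real {ω | t < V ω} + c) :
    ∫⁻ ω, ENNReal.ofReal (U ω) * ENNReal.ofReal (V ω) ∂P
      ≤ (∫⁻ ω, ENNReal.ofReal (U ω) ∂P) * (∫⁻ ω, ENNReal.ofReal (V ω) ∂P)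
        + ∫⁻ u in Iio c, ENNReal.ofReal (a u) * ENNReal.ofReal (b u) ∂uniform01 := by
  have hmeas (Z : Ω → ℝ) : Measurable fun t => P {ω | t < Z ω} :=
    Antitone.measurable fun s t hst => measure_mono fun ω hω => hst.trans_lt hω
  have hU0' : 0 ≤ᵐ[P] U := ae_of_all _ hU0
  have hV0' : 0 ≤ᵐ[P] V := ae_of_all _ hV0
  have hmem := ae_restrict_of_ae (s := Iio c) ae_mem_Ioo_uniform01
  rw [lintegral_ofReal_mul_eq_lintegral_meas_inter hU.aemeasurable hV.aemeasurable hU0' hV0',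
    lintegral_ofReal_mul_eq_lintegral_meas_inter
      (aemeasurable_uniform01_of_antitoneOn ha).restrict
      (aemeasurable_uniform01_of_antitoneOn hb).restrict
      (hmem.mono ha0) (hmem.mono hb0),
    lintegral_eq_lintegral_meas_lt P hU0' hU.aemeasurable,
    lintegral_eq_lintegral_meas_lt P hV0' hV.aemeasurable,
    ← lintegral_mul_const _ (hmeas U), ← lintegral_add_left ((hmeas U).mul_const _)]
  refine lintegral_mono fun s => ?_
  rw [← lintegral_const_mul _ (hmeas V), ← lintegral_add_left ((hmeas V).const_mul _)]
  refine lintegral_mono fun t => ?_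
  have := measureReal_inter_le_of_stochLE hUa hVb ha hb (hmix s t)
  rwa [← ENNReal.ofReal_le_ofReal_iff (by positivity), ENNReal.ofReal_add (by positivity)
    (by positivity), ENNReal.ofReal_mul (by positivity), ofReal_measureReal, ofReal_measureReal,
    ofReal_measureReal, ofReal_measureReal] at this

-- Rio's covariance inequality: by layer cake the covariance integrates
-- `P (s < U, t < V) - P (s < U) * P (t < V)`, which is at most `c` and the two tails.
lemma covariance_le_setIntegral_of_stochLE (hU : Measurable U) (hV : Measurable V)
    (hU2 : MemLp U 2 P) (hV2 : MemLp V 2 P)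
    (hU0 : ∀ ω, 0 ≤ U ω) (hV0 : ∀ ω, 0 ≤ V ω) (hUa : StochLE P U a) (hVb : StochLE P V b)
    (ha : AntitoneOn a (Ioo 0 1)) (hb : AntitoneOn b (Ioo 0 1))
    (ha0 : ∀ u ∈ Ioo 0 1, 0 ≤ a u) (hb0 : ∀ u ∈ Ioo 0 1, 0 ≤ b u)
    (hab : Integrable (fun u => a u * b u) uniform01)
    (hmix : ∀ s t, P.real ({ω | s < U ω} ∩ {ω | t < V ω})
      ≤ P.real {ω | s < U ω} * P.real {ω | t < V ω} + c) :
    cov[U, V; P] ≤ ∫ u in Iio c, a u * b u ∂uniform01 := by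
  have hmem := ae_restrict_of_ae (s := Iio c) ae_mem_Ioo_uniform01
  have hab0 : 0 ≤ᵐ[uniform01.restrict (Iio c)] fun u => a u * b u :=
    hmem.mono fun u hu => mul_nonneg (ha0 u hu) (hb0 u hu)
  have hEU : 0 ≤ ∫ ω, U ω ∂P := integral_nonneg hU0
  have hEV : 0 ≤ ∫ ω, V ω ∂P := integral_nonneg hV0
  have hEab : 0 ≤ ∫ u in Iio c, a u * b u ∂uniform01 := integral_nonneg_of_ae hab0
  rw [covariance_eq_sub hU2 hV2, sub_le_iff_le_add', ← ENNReal.ofReal_le_ofReal_iff (by positivity),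
    ENNReal.ofReal_add (by positivity) hEab, ENNReal.ofReal_mul hEU,
    ofReal_integral_eq_lintegral_ofReal (hU2.integrable_mul hV2)
      (ae_of_all _ fun ω => mul_nonneg (hU0 ω) (hV0 ω)),
    ofReal_integral_eq_lintegral_ofReal (hU2.integrable one_le_two) (ae_of_all _ hU0),
    ofReal_integral_eq_lintegral_ofReal (hV2.integrable one_le_two) (ae_of_all _ hV0),
    ofReal_integral_eq_lintegral_ofReal hab.restrict hab0]
  simp only [Pi.mul_apply, ENNReal.ofReal_mul (hU0 _)]
  rw [lintegral_congr_ae (hmem.mono fun u hu => ENNReal.ofReal_mul (ha0 u hu))]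
  exact lintegral_mul_le_of_stochLE hU hV hU0 hV0 hUa hVb ha hb ha0 hb0 hmix

lemma integral_mul_sub_integral (hU : MemLp U 2 P) (hV : MemLp V 2 P) :
    ∫ ω, U ω * (V ω - P[V]) ∂P = cov[U, V; P] := by
  have hUV : Integrable (fun ω => U ω * V ω) P := hU.integrable_mul hV
  simp only [mul_sub]
  rw [covariance_eq_sub hU hV, integral_sub hUV ((hU.integrable one_le_two).mul_const _),
    integral_mul_const]
  rfl

end CovarianceInequality

section Mixing

variable {Ω : Type*} {X : ℕ → Ω → ℝ}

/-- The σ-algebra generated by the coordinates `X i` with index in `s`. -/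
abbrev sigmaAlgOn (X : ℕ → Ω → ℝ) (s : Set ℕ) : MeasurableSpace Ω :=
  ⨆ i ∈ s, MeasurableSpace.comap (X i) Real.measurableSpace

lemma measurable_sigmaAlgOn {s : Set ℕ} {i : ℕ} (hi : i ∈ s) : Measurable[sigmaAlgOn X s] (X i) :=
  (comap_measurable (X i)).mono (le_iSup₂_of_le i hi le_rfl) le_rfl

lemma measurable_sum_sigmaAlgOn (X : ℕ → Ω → ℝ) {j k : ℕ} (hjk : j ≤ k + 1) :
    Measurable[sigmaAlgOn X {i | i ≤ k}] fun ω => ∑ l ∈ Finset.range j, X l ω :=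
  @Finset.measurable_fun_sum _ _ _ _ _ _ (sigmaAlgOn X {i | i ≤ k}) _ _ fun l hl =>
    measurable_sigmaAlgOn (by have := Finset.mem_range.1 hl; grind)

variable [mΩ : MeasurableSpace Ω] {P : Measure Ω} {α : ℕ → ℝ}

/-- The sequence `α` bounds the mixing coefficients of the process `X`. Only the upper bound on
`P (A ∩ B) - P A * P B` is recorded. -/
def AlphaMixingBound (P : Measure Ω) (X : ℕ → Ω → ℝ) (α : ℕ → ℝ) : Prop :=
  ∀ (k n : ℕ) (A B : Set Ω), MeasurableSet[sigmaAlgOn X {i | i ≤ k}] A →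
    MeasurableSet[sigmaAlgOn X {i | k + n ≤ i}] B →
    P.real (A ∩ B) ≤ P.real A * P.real B + α n

lemma alphaMixingBound_alphaCoef [IsProbabilityMeasure P] :
    AlphaMixingBound P X (alphaCoef P X) := by
  intro k n A B hA hB
  rw [← sub_le_iff_le_add']
  refine (le_abs_self _).trans (le_csSup ⟨1, ?_⟩ ⟨k, A, B, hA, hB, rfl⟩)
  rintro _ ⟨_, A', B', _, _, rfl⟩
  exact abs_sub_le_of_nonneg_of_le measureReal_nonneg measureReal_le_one
    (mul_nonneg measureReal_nonneg measureReal_nonneg)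
    (mul_le_one₀ measureReal_le_one measureReal_nonneg measureReal_le_one)

lemma AlphaMixingBound.comp (h : AlphaMixingBound P X α) {f : ℝ → ℝ} (hf : Measurable f) :
    AlphaMixingBound P (fun i ω => f (X i ω)) α := by
  have hle (s : Set ℕ) : sigmaAlgOn (fun i ω => f (X i ω)) s ≤ sigmaAlgOn X s :=
    iSup₂_le fun i hi => Measurable.comap_le (hf.comp (measurable_sigmaAlgOn hi))
  exact fun k n A B hA hB => h k n A B (hle _ A hA) (hle _ B hB)

end Mixing

section DominatedMixing

open ProbabilityTheory

variable {Ω : Type*} [MeasurableSpace Ω] {P : Measure Ω} {Z : ℕ → Ω → ℝ} {α : ℕ → ℝ} {a : ℝ → ℝ}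

/-- A nonnegative process `Z` with mixing coefficients bounded by `α` all of whose coordinates are
stochastically dominated by the quantile function `a`; the coordinates need not have the same
law. -/
structure DominatedMixing (P : Measure Ω) (Z : ℕ → Ω → ℝ) (α : ℕ → ℝ) (a : ℝ → ℝ) : Prop where
  measurable : ∀ i, Measurable (Z i)
  nonneg : ∀ i ω, 0 ≤ Z i ω
  mixing : AlphaMixingBound P Z α
  stochLE : ∀ i, StochLE P (Z i) a
  antitoneOn : AntitoneOn a (Ioo 0 1)
  quantile_nonneg : ∀ u ∈ Ioo 0 1, 0 ≤ a u

namespace DominatedMixing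

lemma comp (h : DominatedMixing P Z α a) {g : ℝ → ℝ} (hg : Monotone g) (hg0 : 0 ≤ g 0) :
    DominatedMixing P (fun i ω => g (Z i ω)) α fun u => g (a u) where
  measurable i := hg.measurable.comp (h.measurable i)
  nonneg i ω := hg0.trans (hg (h.nonneg i ω))
  mixing := h.mixing.comp hg.measurable
  stochLE i := (h.stochLE i).comp hg
  antitoneOn := hg.comp_antitoneOn h.antitoneOn
  quantile_nonneg u hu := hg0.trans (hg (h.quantile_nonneg u hu))

lemma sigmaAlgOn_le (h : DominatedMixing P Z α a) (s : Set ℕ) :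
    sigmaAlgOn Z s ≤ ‹MeasurableSpace Ω› :=
  iSup₂_le fun i _ => (h.measurable i).comap_le

lemma ae_le (h : DominatedMixing P Z α a) {M : ℝ} (haM : ∀ u ∈ Ioo 0 1, a u ≤ M) (i : ℕ) :
    ∀ᵐ ω ∂P, Z i ω ≤ M :=
  (h.stochLE i).ae_le (ae_mem_Ioo_uniform01.mono haM)

lemma integrable_mul (h : DominatedMixing P Z α a) {b : ℝ → ℝ} {M B : ℝ}
    (haM : ∀ u ∈ Ioo 0 1, a u ≤ M) (hb : AntitoneOn b (Ioo 0 1)) (hb0 : ∀ u ∈ Ioo 0 1, 0 ≤ b u)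
    (hbB : ∀ u ∈ Ioo 0 1, b u ≤ B) : Integrable (fun u => b u * a u) uniform01 := by
  refine Integrable.of_mem_Icc 0 (B * M) ((aemeasurable_uniform01_of_antitoneOn hb).mul
    (aemeasurable_uniform01_of_antitoneOn h.antitoneOn)) ?_
  filter_upwards [ae_mem_Ioo_uniform01] with u hu
  have ha0 := h.quantile_nonneg u hu
  have hB0 := (hb0 u hu).trans (hbB u hu)
  exact ⟨mul_nonneg (hb0 u hu) ha0, mul_le_mul (hbB u hu) (haM u hu) ha0 hB0⟩

variable [IsProbabilityMeasure P] {M : ℝ}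

lemma memLp (h : DominatedMixing P Z α a) (haM : ∀ u ∈ Ioo 0 1, a u ≤ M) (i : ℕ) (p : ENNReal) :
    MemLp (Z i) p P :=
  (h.stochLE i).memLp (h.measurable i) (h.nonneg i) (ae_mem_Ioo_uniform01.mono haM) p

lemma covariance_le (h : DominatedMixing P Z α a) (haM : ∀ u ∈ Ioo 0 1, a u ≤ M) {k n : ℕ}
    {U : Ω → ℝ} {b : ℝ → ℝ} {B : ℝ} (hU : Measurable[sigmaAlgOn Z {i | i ≤ k}] U)
    (hU0 : ∀ ω, 0 ≤ U ω) (hUb : StochLE P U b) (hb : AntitoneOn b (Ioo 0 1))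
    (hb0 : ∀ u ∈ Ioo 0 1, 0 ≤ b u) (hbB : ∀ u ∈ Ioo 0 1, b u ≤ B) :
    cov[U, Z (k + n); P] ≤ ∫ u in Iio (α n), b u * a u ∂uniform01 := by
  have hUm : Measurable U := hU.mono (h.sigmaAlgOn_le _) le_rfl
  refine covariance_le_setIntegral_of_stochLE hUm (h.measurable _)
    (hUb.memLp hUm hU0 (ae_mem_Ioo_uniform01.mono hbB) 2) (h.memLp haM _ 2) hU0 (h.nonneg _) hUb
    (h.stochLE _) hb h.antitoneOn hb0 h.quantile_nonneg (h.integrable_mul haM hb hb0 hbB)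
    fun s t => h.mixing k n _ _ (hU measurableSet_Ioi) ?_
  exact measurable_sigmaAlgOn (X := Z) (mem_ofPred.2 le_rfl) measurableSet_Ioi

lemma variance_le (h : DominatedMixing P Z α a) (haM : ∀ u ∈ Ioo 0 1, a u ≤ M) (i : ℕ) :
    Var[Z i; P] ≤ ∫ u, a u * a u ∂uniform01 := by
  have hone : uniform01.restrict (Iio 1) = uniform01 :=
    Measure.restrict_eq_self_of_ae_mem (ae_mem_Ioo_uniform01.mono fun u hu => hu.2)
  rw [← covariance_self (h.measurable i).aemeasurable, ← hone]
  refine covariance_le_setIntegral_of_stochLE (h.measurable i) (h.measurable i) (h.memLp haM i 2)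
    (h.memLp haM i 2) (h.nonneg i) (h.nonneg i) (h.stochLE i) (h.stochLE i) h.antitoneOn
    h.antitoneOn h.quantile_nonneg h.quantile_nonneg
    (h.integrable_mul haM h.antitoneOn h.quantile_nonneg haM) fun s t => ?_
  exact measureReal_le_one.trans (le_add_of_nonneg_left (by positivity))

lemma memLp_comp_sum (h : DominatedMixing P Z α a) {f : ℝ → ℝ} (hf : Monotone f)
    (hf1 : ∀ x, |f x| ≤ 1) (j : ℕ) :
    MemLp (fun ω => f (∑ l ∈ Finset.range j, Z l ω)) 2 P :=
  MemLp.of_bound (hf.measurable.comp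
    (Finset.measurable_fun_sum _ fun l _ => h.measurable l)).aestronglyMeasurable 1
    (ae_of_all _ fun _ => hf1 _)

lemma covariance_increment_le (h : DominatedMixing P Z α a) (haM : ∀ u ∈ Ioo 0 1, a u ≤ M)
    {f : ℝ → ℝ} (hf : Monotone f) (hlip : LipschitzWith 1 f) (k n : ℕ) :
    cov[fun ω => f (∑ l ∈ Finset.range (k + 1), Z l ω) - f (∑ l ∈ Finset.range k, Z l ω),
      Z (k + n); P] ≤ ∫ u in Iio (α n), a u * a u ∂uniform01 := by
  have hsum (ω : Ω) : ∑ l ∈ Finset.range (k + 1), Z l ω = ∑ l ∈ Finset.range k, Z l ω + Z k ω :=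
    Finset.sum_range_succ (fun l => Z l ω) k
  refine h.covariance_le haM ?_ (fun ω => ?_) ((h.stochLE k).mono fun ω => ?_) h.antitoneOn
    h.quantile_nonneg haM
  · exact (hf.measurable.comp (measurable_sum_sigmaAlgOn Z le_rfl)).sub
      (hf.measurable.comp (measurable_sum_sigmaAlgOn Z k.le_succ))
  · rw [sub_nonneg, hsum]
    exact hf (le_add_of_nonneg_right (h.nonneg k ω))
  · refine (le_abs_self _).trans ((hlip.dist_le_mul _ _).trans ?_)
    rw [hsum, Real.dist_eq, add_sub_cancel_left, abs_of_nonneg (h.nonneg k ω), NNReal.coe_one,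
      one_mul]

lemma covariance_comp_sum_le_const (h : DominatedMixing P Z α a) (haM : ∀ u ∈ Ioo 0 1, a u ≤ M)
    {f : ℝ → ℝ} (hf : Monotone f) (hf1 : ∀ x, |f x| ≤ 1) (k n : ℕ) :
    cov[fun ω => f (∑ l ∈ Finset.range (k + 1), Z l ω), Z (k + n); P]
      ≤ ∫ u in Iio (α n), 2 * a u ∂uniform01 := by
  have hf1' (x : ℝ) := abs_le.1 (hf1 x)
  rw [← covariance_add_const_left ((h.memLp_comp_sum hf hf1 (k + 1)).integrable one_le_two) 1]
  refine h.covariance_le haM ?_ (fun ω => ?_) (stochLE_const fun ω => ?_) antitoneOn_const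
    (fun _ _ => zero_le_two) fun _ _ => le_rfl
  · exact (hf.measurable.comp (measurable_sum_sigmaAlgOn Z le_rfl)).add_const 1
  · linarith [(hf1' (∑ l ∈ Finset.range (k + 1), Z l ω)).1]
  · linarith [(hf1' (∑ l ∈ Finset.range (k + 1), Z l ω)).2]

-- The last `r` summands are peeled off one at a time; what remains is separated from `Z i` by a gap
-- of length `r + 1`.
lemma covariance_comp_sum_le (h : DominatedMixing P Z α a) (haM : ∀ u ∈ Ioo 0 1, a u ≤ M)
    {f : ℝ → ℝ} (hf : Monotone f) (hlip : LipschitzWith 1 f) (hf1 : ∀ x, |f x| ≤ 1) (i r : ℕ) :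
    cov[fun ω => f (∑ l ∈ Finset.range i, Z l ω), Z i; P]
      ≤ ∑ d ∈ Finset.range r, ∫ u in Iio (α (d + 1)), a u * a u ∂uniform01
        + ∫ u in Iio (α (r + 1)), 2 * a u ∂uniform01 := by
  have hmem := fun s => ae_restrict_of_ae (s := s) ae_mem_Ioo_uniform01
  have peel : cov[fun ω => f (∑ l ∈ Finset.range i, Z l ω), Z i; P]
      ≤ ∑ d ∈ Finset.range r, ∫ u in Iio (α (d + 1)), a u * a u ∂uniform01
        + cov[fun ω => f (∑ l ∈ Finset.range (i - r), Z l ω), Z i; P] := by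
    induction r with
    | zero => simp
    | succ r ih =>
      rw [Finset.sum_range_succ]
      rcases hir : i - r with _ | k
      · have : 0 ≤ ∫ u in Iio (α (r + 1)), a u * a u ∂uniform01 :=
          integral_nonneg fun u => mul_self_nonneg _
        rw [hir] at ih
        rw [show i - (r + 1) = 0 by omega]
        linarith
      · have hinc := h.covariance_increment_le haM hf hlip k (r + 1)
        rw [covariance_fun_sub_left (h.memLp_comp_sum hf hf1 _) (h.memLp_comp_sum hf hf1 _)
          (h.memLp haM _ 2), show k + (r + 1) = i by omega] at hinc
        rw [hir] at ih
        rw [show i - (r + 1) = k by omega]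
        linarith
  refine peel.trans (add_le_add_right ?_ _)
  rcases hir : i - r with _ | k
  · simp only [Finset.range_zero, Finset.sum_empty, covariance_const_left]
    exact integral_nonneg_of_ae ((hmem _).mono fun u hu =>
      mul_nonneg zero_le_two (h.quantile_nonneg u hu))
  · have := h.covariance_comp_sum_le_const haM hf hf1 k (r + 1)
    rwa [show k + (r + 1) = i by omega] at this

lemma memLp_centered_sum (h : DominatedMixing P Z α a) (haM : ∀ u ∈ Ioo 0 1, a u ≤ M) (n : ℕ)
    (p : ENNReal) : MemLp (fun ω => ∑ l ∈ Finset.range n, (Z l ω - P[Z l])) p P :=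
  memLp_finsetSum _ fun l _ => (h.memLp haM l p).sub (memLp_const _)

lemma integrable_pseudoHuber_centered_sum (h : DominatedMixing P Z α a)
    (haM : ∀ u ∈ Ioo 0 1, a u ≤ M) (n : ℕ) :
    Integrable (fun ω => pseudoHuber (∑ l ∈ Finset.range n, (Z l ω - P[Z l]))) P := by
  have hint := (h.memLp_centered_sum haM n 1).integrable le_rfl
  refine hint.norm.mono' (continuous_pseudoHuber.comp_aestronglyMeasurable
    hint.aestronglyMeasurable) (ae_of_all _ fun ω => ?_)
  rw [Real.norm_of_nonneg (pseudoHuber_nonneg _)]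
  exact pseudoHuber_le_abs _

lemma integral_pseudoHuber_centered_sum_succ_le (h : DominatedMixing P Z α a)
    (haM : ∀ u ∈ Ioo 0 1, a u ≤ M) (r n : ℕ) :
    ∫ ω, pseudoHuber (∑ l ∈ Finset.range (n + 1), (Z l ω - P[Z l])) ∂P
      ≤ ∫ ω, pseudoHuber (∑ l ∈ Finset.range n, (Z l ω - P[Z l])) ∂P
        + (∑ d ∈ Finset.range r, ∫ u in Iio (α (d + 1)), a u * a u ∂uniform01
          + ∫ u in Iio (α (r + 1)), 2 * a u ∂uniform01)
        + ∫ u, a u * a u ∂uniform01 := by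
  let m : ℝ := ∑ l ∈ Finset.range n, P[Z l]
  let f : ℝ → ℝ := fun x => pseudoHuberSlope (x - m)
  have hf : Monotone f := monotone_pseudoHuberSlope.comp fun _ _ hxy => sub_le_sub_right hxy m
  have hf1 (x : ℝ) : |f x| ≤ 1 := abs_pseudoHuberSlope_le_one _
  have hlip : LipschitzWith 1 f := fun x y => by
    simpa using lipschitzWith_pseudoHuberSlope (x - m) (y - m)
  have hfS := h.memLp_comp_sum hf hf1 n
  have hZc : MemLp (fun ω => Z n ω - P[Z n]) 2 P := (h.memLp haM n 2).sub (memLp_const _)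
  have hg := h.integrable_pseudoHuber_centered_sum haM n
  have hfZ : Integrable (fun ω => f (∑ l ∈ Finset.range n, Z l ω) * (Z n ω - P[Z n])) P :=
    hfS.integrable_mul hZc
  have hsq : Integrable (fun ω => (Z n ω - P[Z n]) ^ 2 / 2) P := hZc.integrable_sq.div_const 2
  have hgf : Integrable (fun ω => pseudoHuber (∑ l ∈ Finset.range n, (Z l ω - P[Z l]))
    + f (∑ l ∈ Finset.range n, Z l ω) * (Z n ω - P[Z n])) P := hg.add hfZ
  calc ∫ ω, pseudoHuber (∑ l ∈ Finset.range (n + 1), (Z l ω - P[Z l])) ∂P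
      ≤ ∫ ω, (pseudoHuber (∑ l ∈ Finset.range n, (Z l ω - P[Z l]))
          + f (∑ l ∈ Finset.range n, Z l ω) * (Z n ω - P[Z n]) + (Z n ω - P[Z n]) ^ 2 / 2) ∂P := by
        refine integral_mono (h.integrable_pseudoHuber_centered_sum haM (n + 1))
          (hgf.add hsq) fun ω => ?_
        simp only [Finset.sum_range_succ, f, m, ← Finset.sum_sub_distrib]
        exact pseudoHuber_add_le _ _
    _ = ∫ ω, pseudoHuber (∑ l ∈ Finset.range n, (Z l ω - P[Z l])) ∂P
          + cov[fun ω => f (∑ l ∈ Finset.range n, Z l ω), Z n; P] + Var[Z n; P] / 2 := by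
        rw [integral_add hgf hsq, integral_add hg hfZ, integral_div,
          integral_mul_sub_integral hfS (h.memLp haM n 2),
          variance_eq_integral (h.measurable n).aemeasurable]
    _ ≤ _ := by
        gcongr
        · exact h.covariance_comp_sum_le haM hf hlip hf1 n r
        · linarith [h.variance_le haM n, variance_nonneg (Z n) P]

lemma integral_pseudoHuber_centered_sum_le (h : DominatedMixing P Z α a)
    (haM : ∀ u ∈ Ioo 0 1, a u ≤ M) (r n : ℕ) :
    ∫ ω, pseudoHuber (∑ l ∈ Finset.range n, (Z l ω - P[Z l])) ∂P
      ≤ n * (∫ u, a u * a u ∂uniform01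
        + ∑ d ∈ Finset.range r, ∫ u in Iio (α (d + 1)), a u * a u ∂uniform01
        + ∫ u in Iio (α (r + 1)), 2 * a u ∂uniform01) := by
  induction n with
  | zero => simp [pseudoHuber]
  | succ n ih =>
    have := h.integral_pseudoHuber_centered_sum_succ_le haM r n
    push_cast
    linarith

end DominatedMixing

end DominatedMixing

section BlockLength

variable {α : ℕ → ℝ} {A Q : ℝ → ℝ} {N t u : ℝ} {r : ℕ}

lemma uniform01_real_mono {S T : Set ℝ} (h : ∀ u ∈ Ioo (0 : ℝ) 1, u ∈ S → u ∈ T) :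
    uniform01.real S ≤ uniform01.real T :=
  ENNReal.toReal_mono (measure_ne_top _ _) (measure_mono_ae (ae_mem_Ioo_uniform01.mono h))

lemma uniform01_real_Iio_of_mem (hu : u ∈ Ioo (0 : ℝ) 1) : uniform01.real (Iio u) = u := by
  rw [uniform01_real_Iio, min_eq_left hu.2.le, max_eq_right hu.1.le]

lemma lt_of_lt_uniform01_real (hQ : AntitoneOn Q (Ioo 0 1)) (hu : u ∈ Ioo (0 : ℝ) 1)
    (h : u < uniform01.real {v | t < Q v}) : t < Q u := by
  by_contra! hle
  refine h.not_ge ((uniform01_real_mono fun v hv htv => ?_).trans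
    (uniform01_real_Iio_of_mem hu).le)
  exact lt_of_not_ge fun huv => ((hQ hu hv huv).trans hle).not_gt htv

lemma le_uniform01_real_of_lt (hQ : AntitoneOn Q (Ioo 0 1)) (hu : u ∈ Ioo (0 : ℝ) 1)
    (h : t < Q u) : u ≤ uniform01.real {v | t < Q v} :=
  (uniform01_real_Iio_of_mem hu).ge.trans
    (uniform01_real_mono fun _ hv hvu => h.trans_le (hQ hv hu hvu.out.le))

/-- The length `r` of blocks balancing mixing against tails in a sample of size `N`: it is, up to
one step, where `α` drops below the tail of `Q` at the truncation level `N / r`. -/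
structure IsBlockLength (α : ℕ → ℝ) (Q : ℝ → ℝ) (N : ℝ) (r : ℕ) : Prop where
  pos : 0 < r
  alpha_succ_le : α (r + 1) ≤ uniform01.real {u | N / (r + 1) < Q u}
  lt_alpha : r = 1 ∨ uniform01.real {u | N / r < Q u} < α r

lemma exists_isBlockLength (hα : Tendsto α atTop (nhds 0)) {ε : ℝ} (hε : 0 < ε)
    (hQ : ∀ u ∈ Ioo 0 1, ε ≤ Q u) (N : ℝ) : ∃ r, IsBlockLength α Q N r := by
  let good (r : ℕ) : Prop := α (r + 1 + 1) ≤ uniform01.real {u | N / ((r + 1 : ℕ) + 1) < Q u}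
  have hex : ∃ r, good r := by
    have hlevel : Tendsto (fun r : ℕ => N / ((r + 1 : ℕ) + 1 : ℝ)) atTop (nhds 0) :=
      tendsto_const_nhds.div_atTop (tendsto_atTop_add_const_right _ _
        (tendsto_natCast_atTop_atTop.comp (tendsto_add_atTop_nat 1)))
    obtain ⟨r, hr, hαr⟩ := ((hlevel.eventually_lt_const hε).and
      ((hα.comp (tendsto_add_atTop_nat 2)).eventually_le_const one_pos)).exists
    refine ⟨r, hαr.trans (probReal_univ (μ := uniform01).ge.trans ?_)⟩
    exact uniform01_real_mono fun u hu _ => hr.trans_le (hQ u hu)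
  classical
  refine ⟨Nat.find hex + 1, Nat.succ_pos _, Nat.find_spec hex, ?_⟩
  rcases hr : Nat.find hex with _ | r
  · exact Or.inl rfl
  · have := Nat.find_min hex (r.lt_succ_self.trans_eq hr.symm)
    exact Or.inr (by simpa only [good, not_le, Nat.cast_add, Nat.cast_one] using this)

/-- The function `A` dominates `1` plus the number of lags `d ≥ 1` with `u < α d`, i.e. the inverse
of the mixing rate. -/
structure IsMixingRate (α : ℕ → ℝ) (A : ℝ → ℝ) : Prop where
  aemeasurable : AEMeasurable A uniform01
  one_le : ∀ u, 1 ≤ A u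
  add_two_le : ∀ u ∈ Ioo 0 1, ∀ d, u < α (d + 1) → (d : ℝ) + 2 ≤ A u

lemma IsMixingRate.one_add_sum_le (hA : IsMixingRate α A) (hu : u ∈ Ioo (0 : ℝ) 1) (r : ℕ) :
    1 + ∑ d ∈ Finset.range r, (if u < α (d + 1) then (1 : ℝ) else 0) ≤ A u := by
  induction r with
  | zero => simpa using hA.one_le u
  | succ r ih =>
    by_cases h : u < α (r + 1)
    · have hcard : ∑ d ∈ Finset.range (r + 1), (if u < α (d + 1) then (1 : ℝ) else 0) ≤ r + 1 :=
        (Finset.sum_le_card_nsmul _ _ 1 fun d _ => by split_ifs <;> norm_num).trans (by simp)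
      linarith [hA.add_two_le u hu r h]
    · rwa [Finset.sum_range_succ, if_neg h, add_zero]

lemma min_le_sampleError {B q : ℝ} (hN : 0 < N) (hq : 0 ≤ q) (h : N ≤ B * q) :
    min q N ≤ sampleError B q N := by
  refine le_min (min_le_left q N) (le_min (min_le_right q N) ((min_le_left q N).trans ?_))
  rw [le_div_iff₀ hN]
  nlinarith

lemma sq_min_mul_div_le_sampleError {B c q : ℝ} (hN : 0 < N) (hq : 0 ≤ q) (hc : 0 ≤ c)
    (hr : 0 < r) (hcr : c ≤ r + 1) (hcB : c ≤ B) :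
    c * min q (N / r) ^ 2 / N ≤ 2 * sampleError B q N := by
  have hr' : (1 : ℝ) ≤ r := by exact_mod_cast hr
  have hM : N / r * r = N := div_mul_cancel₀ N (by positivity)
  have hM0 : 0 < N / r := by positivity
  set M := N / r
  have hm0 : 0 ≤ min q M := le_min hq hM0.le
  have hmq : min q M ≤ q := min_le_left q M
  have hmM : min q M ≤ M := min_le_right q M
  have hMN : M ≤ N := by nlinarith
  have hblock : c * min q M ≤ 2 * N := by nlinarith
  rw [sampleError, mul_min_of_nonneg _ _ zero_le_two, mul_min_of_nonneg _ _ zero_le_two]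
  refine le_min ?_ (le_min ?_ ?_)
  · rw [div_le_iff₀ hN]
    nlinarith
  · rw [div_le_iff₀ hN]
    nlinarith
  · have hmono : c * min q M ^ 2 / N ≤ B * q ^ 2 / N := by gcongr; exact hc.trans hcB
    have : 0 ≤ B * q ^ 2 / N := by have := hc.trans hcB; positivity
    linarith

namespace IsBlockLength

lemma le_mul_of_lt_alpha (hr : IsBlockLength α Q N r) (hA : IsMixingRate α A)
    (hQ : AntitoneOn Q (Ioo 0 1)) (hu : u ∈ Ioo (0 : ℝ) 1) (hQu : 0 ≤ Q u) (h : u < α (r + 1)) :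
    N ≤ A u * Q u := by
  have hlevel := lt_of_lt_uniform01_real hQ hu (h.trans_le hr.alpha_succ_le)
  rw [div_lt_iff₀ (by positivity)] at hlevel
  nlinarith [hA.add_two_le u hu r h]

lemma le_mul_of_div_lt (hr : IsBlockLength α Q N r) (hA : IsMixingRate α A)
    (hQ : AntitoneOn Q (Ioo 0 1)) (hu : u ∈ Ioo (0 : ℝ) 1) (hQu : 0 ≤ Q u) (h : N / r < Q u) :
    N ≤ A u * Q u := by
  have hrA : (r : ℝ) ≤ A u := by
    rcases hr.lt_alpha with rfl | hlt
    · simpa using hA.one_le u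
    · obtain ⟨d, rfl⟩ := Nat.exists_eq_add_one.2 hr.pos
      have := hA.add_two_le u hu d ((le_uniform01_real_of_lt hQ hu h).trans_lt hlt)
      push_cast
      linarith
  have hr0 : (0 : ℝ) < r := by exact_mod_cast hr.pos
  rw [div_lt_iff₀ hr0] at h
  nlinarith

end IsBlockLength

end BlockLength

section TruncationError

variable {M N x : ℝ}

/-- The part of `x` above the truncation level `M`, itself truncated at `N`. -/
noncomputable def excess (M N x : ℝ) : ℝ := if M < x then min x N else 0

lemma excess_nonneg (hM : 0 ≤ M) (hN : 0 ≤ N) (x : ℝ) : 0 ≤ excess M N x := by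
  unfold excess
  split_ifs with h
  exacts [le_min (hM.trans h.le) hN, le_rfl]

lemma excess_le (hN : 0 ≤ N) (x : ℝ) : excess M N x ≤ N := by
  unfold excess
  split_ifs
  exacts [min_le_right _ _, hN]

lemma monotone_excess (hM : 0 ≤ M) (hN : 0 ≤ N) : Monotone (excess M N) := by
  intro x y hxy
  by_cases hx : M < x
  · simpa only [excess, if_pos hx, if_pos (hx.trans_le hxy)] using min_le_min_right N hxy
  · simpa only [excess, if_neg hx] using excess_nonneg hM hN y

lemma min_sub_min_le_excess (hM : 0 ≤ M) (x : ℝ) : min x N - min x M ≤ excess M N x := by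
  unfold excess
  split_ifs with h
  · linarith [min_eq_right h.le]
  · linarith [min_eq_left (not_lt.1 h), min_le_left x N]

end TruncationError

section MeanSampleError

variable {α : ℕ → ℝ} {A Q : ℝ → ℝ} {N u : ℝ} {r : ℕ}

/-- The mean of `sampleError` at a uniform random level. -/
noncomputable def meanSampleError (A Q : ℝ → ℝ) (N : ℝ) : ℝ :=
  ∫ u, sampleError (A u) (Q u) N ∂uniform01

lemma integrable_sampleError (hA : IsMixingRate α A) (hQ : AntitoneOn Q (Ioo 0 1))
    (hQ0 : ∀ u ∈ Ioo 0 1, 0 ≤ Q u) (hN : 0 ≤ N) :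
    Integrable (fun u => sampleError (A u) (Q u) N) uniform01 := by
  have hQm := aemeasurable_uniform01_of_antitoneOn hQ
  refine Integrable.of_mem_Icc 0 N (hQm.min (aemeasurable_const.min
    ((hA.aemeasurable.mul (hQm.pow_const 2)).div_const N))) ?_
  filter_upwards [ae_mem_Ioo_uniform01] with u hu
  exact ⟨sampleError_nonneg (zero_le_one.trans (hA.one_le u)) (hQ0 u hu) hN,
    (min_le_right _ _).trans (min_le_left _ _)⟩

namespace IsBlockLength

lemma integral_excess_le (hr : IsBlockLength α Q N r) (hA : IsMixingRate α A)
    (hQ : AntitoneOn Q (Ioo 0 1)) (hQ0 : ∀ u ∈ Ioo 0 1, 0 ≤ Q u) (hN : 0 < N) :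
    ∫ u, excess (N / r) N (Q u) ∂uniform01 ≤ meanSampleError A Q N := by
  refine integral_mono_of_nonneg (ae_of_all _ fun u => excess_nonneg (by positivity) hN.le _)
    (integrable_sampleError hA hQ hQ0 hN.le) ?_
  filter_upwards [ae_mem_Ioo_uniform01] with u hu
  change excess (N / r) N (Q u) ≤ _
  unfold excess
  split_ifs with h
  · exact min_le_sampleError hN (hQ0 u hu) (hr.le_mul_of_div_lt hA hQ hu (hQ0 u hu) h)
  · exact sampleError_nonneg (zero_le_one.trans (hA.one_le u)) (hQ0 u hu) hN.le

lemma truncated_moments_le (hr : IsBlockLength α Q N r) (hA : IsMixingRate α A)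
    (hQ : AntitoneOn Q (Ioo 0 1)) (hQ0 : ∀ u ∈ Ioo 0 1, 0 ≤ Q u) (hN : 0 < N)
    (hu : u ∈ Ioo (0 : ℝ) 1) :
    (1 + ∑ d ∈ Finset.range r, (if u < α (d + 1) then (1 : ℝ) else 0)) * min (Q u) (N / r) ^ 2 / N
      + (if u < α (r + 1) then 2 * min (Q u) (N / r) else 0)
      ≤ 4 * sampleError (A u) (Q u) N := by
  have hind (d : ℕ) : (0 : ℝ) ≤ (if u < α (d + 1) then 1 else 0) ∧
      (if u < α (d + 1) then (1 : ℝ) else 0) ≤ 1 := by split_ifs <;> norm_num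
  have hcard : ∑ d ∈ Finset.range r, (if u < α (d + 1) then (1 : ℝ) else 0) ≤ r :=
    (Finset.sum_le_card_nsmul _ _ 1 fun d _ => (hind d).2).trans (by simp)
  have hcard0 : (0 : ℝ) ≤ ∑ d ∈ Finset.range r, (if u < α (d + 1) then (1 : ℝ) else 0) :=
    Finset.sum_nonneg fun d _ => (hind d).1
  have hsecond := sq_min_mul_div_le_sampleError hN (hQ0 u hu) (add_nonneg zero_le_one hcard0)
    hr.pos (by linarith) (hA.one_add_sum_le hu r)
  have hfirst : (if u < α (r + 1) then 2 * min (Q u) (N / r) else 0)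
      ≤ 2 * sampleError (A u) (Q u) N := by
    split_ifs with h
    · have hle : N / r ≤ N := div_le_self hN.le (by exact_mod_cast hr.pos)
      linarith [min_le_min_left (Q u) hle, min_le_sampleError hN (hQ0 u hu)
        (hr.le_mul_of_lt_alpha hA hQ hu (hQ0 u hu) h)]
    · linarith [sampleError_nonneg (zero_le_one.trans (hA.one_le u)) (hQ0 u hu) hN.le]
  linarith

end IsBlockLength

end MeanSampleError

section BlockMoment

open ProbabilityTheory

variable {Ω : Type*} [MeasurableSpace Ω] {P : Measure Ω} [IsProbabilityMeasure P]
  {Y : ℕ → Ω → ℝ} {α : ℕ → ℝ} {A Q : ℝ → ℝ} {n r : ℕ}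

lemma DominatedMixing.integral_pseudoHuber_truncated_le (h : DominatedMixing P Y α Q)
    (hA : IsMixingRate α A) (hn : 0 < n) (hr : IsBlockLength α Q n r) :
    ∫ ω, pseudoHuber (∑ l ∈ Finset.range n,
      (min (Y l ω) (n / r) / n - P[fun ω => min (Y l ω) (n / r) / n])) ∂P
      ≤ 4 * meanSampleError A Q n := by
  have hn' : (0 : ℝ) < n := by exact_mod_cast hn
  let a : ℝ → ℝ := fun u => min (Q u) (n / r) / n
  have hZ : DominatedMixing P (fun i ω => min (Y i ω) (n / r) / n) α a :=
    h.comp (g := fun x => min x (n / r) / n)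
      (fun x y hxy => by dsimp only; gcongr) (by positivity)
  have haM : ∀ u ∈ Ioo 0 1, a u ≤ n / r / n := fun u _ =>
    div_le_div_of_nonneg_right (min_le_right _ _) hn'.le
  have hsq := hZ.integrable_mul haM hZ.antitoneOn hZ.quantile_nonneg haM
  have hlin := hZ.integrable_mul haM antitoneOn_const (b := fun _ => 2) (fun _ _ => zero_le_two)
    fun _ _ => le_rfl
  have hlag (d : ℕ) := hsq.indicator (measurableSet_Iio (a := α (d + 1)))
  have hsum := integrable_finsetSum (Finset.range r) fun d _ => hlag d
  have hsqs : Integrable (fun u => a u * a u + ∑ d ∈ Finset.range r,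
    (Iio (α (d + 1))).indicator (fun u => a u * a u) u) uniform01 := hsq.add hsum
  have hlast := hlin.indicator (measurableSet_Iio (a := α (r + 1)))
  refine (hZ.integral_pseudoHuber_centered_sum_le haM r n).trans ?_
  simp only [← integral_indicator (measurableSet_Iio (α := ℝ))]
  rw [← integral_finsetSum _ fun d _ => hlag d, ← integral_add hsq hsum,
    ← integral_add hsqs hlast, ← integral_const_mul, meanSampleError, ← integral_const_mul]
  refine integral_mono_ae ((hsqs.add hlast).const_mul _)
    ((integrable_sampleError hA h.antitoneOn h.quantile_nonneg hn'.le).const_mul _) ?_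
  filter_upwards [ae_mem_Ioo_uniform01] with u hu
  refine le_trans (le_of_eq ?_)
    (hr.truncated_moments_le hA h.antitoneOn h.quantile_nonneg hn' hu)
  have hind (x y : ℝ) : (Iio x).indicator (fun u => a u * a u) y
      = (if y < x then 1 else 0) * (a y * a y) := by
    simp only [indicator_apply, mem_Iio, ite_mul, one_mul, zero_mul]
  simp only [hind, ← Finset.sum_mul, indicator_apply, mem_Iio, a]
  split_ifs
  · field_simp
  · simp only [add_zero]
    field_simp

end BlockMoment

section StrongLaw

open ProbabilityTheory

variable {Ω : Type*}

/-- The arithmetic mean of the first `n` coordinates of the process `Y`. -/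
noncomputable def sampleMean (Y : ℕ → Ω → ℝ) (n : ℕ) (ω : Ω) : ℝ :=
  (∑ i ∈ Finset.range n, Y i ω) / n

lemma sampleMean_mono {Y Z : ℕ → Ω → ℝ} (h : ∀ i ω, Y i ω ≤ Z i ω) (n : ℕ) (ω : Ω) :
    sampleMean Y n ω ≤ sampleMean Z n ω :=
  div_le_div_of_nonneg_right (Finset.sum_le_sum fun i _ => h i ω) n.cast_nonneg

lemma sampleMean_nonneg {Y : ℕ → Ω → ℝ} (h : ∀ i ω, 0 ≤ Y i ω) (n : ℕ) (ω : Ω) :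
    0 ≤ sampleMean Y n ω :=
  div_nonneg (Finset.sum_nonneg fun i _ => h i ω) n.cast_nonneg

lemma abs_sampleMean_sub_truncated_le {Y : ℕ → Ω → ℝ} {n : ℕ} {M : ℝ} (hM : 0 ≤ M)
    {ω : Ω} (h : sampleMean (fun i ω => excess M n (Y i ω)) n ω < 1) (hMn : M ≤ n) :
    |sampleMean Y n ω - sampleMean (fun i ω => min (Y i ω) M) n ω|
      ≤ sampleMean (fun i ω => excess M n (Y i ω)) n ω := by
  rcases n.eq_zero_or_pos with rfl | hn
  · simp [sampleMean]
  have hn' : (0 : ℝ) < n := by exact_mod_cast hn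
  have hle : ∀ i ∈ Finset.range n, Y i ω ≤ n := by
    intro i hi
    by_contra! hlt
    have hsingle := Finset.single_le_sum (f := fun i => excess M n (Y i ω))
      (fun i _ => excess_nonneg hM hn'.le (Y i ω)) hi
    simp only [excess, if_pos (hMn.trans_lt hlt), min_eq_right hlt.le] at hsingle
    rw [sampleMean, div_lt_one hn'] at h
    exact h.not_ge hsingle
  rw [abs_of_nonneg (sub_nonneg.2 (sampleMean_mono (fun i ω => min_le_left _ _) n ω)), sampleMean,
    sampleMean, sampleMean, ← sub_div, ← Finset.sum_sub_distrib]
  refine div_le_div_of_nonneg_right (Finset.sum_le_sum fun i hi => ?_) hn'.le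
  have := min_sub_min_le_excess (N := n) hM (Y i ω)
  rwa [min_eq_left (hle i hi)] at this

variable [MeasurableSpace Ω] {P : Measure Ω}

lemma ae_tendsto_zero_of_summable_integral {g : ℕ → Ω → ℝ} (hg : ∀ k, Integrable (g k) P)
    (hg0 : ∀ k ω, 0 ≤ g k ω) (hsum : Summable fun k => ∫ ω, g k ω ∂P) :
    ∀ᵐ ω ∂P, Tendsto (fun k => g k ω) atTop (nhds 0) := by
  have hmeas (k : ℕ) : AEMeasurable (fun ω => ENNReal.ofReal (g k ω)) P :=
    (hg k).aemeasurable.ennreal_ofReal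
  have hfin : ∫⁻ ω, ∑' k, ENNReal.ofReal (g k ω) ∂P ≠ ⊤ := by
    rw [lintegral_tsum hmeas]
    simp_rw [fun k => (ofReal_integral_eq_lintegral_ofReal (hg k) (ae_of_all P (hg0 k))).symm]
    exact hsum.tsum_ofReal_ne_top
  filter_upwards [ae_lt_top' (AEMeasurable.tsum hmeas) hfin] with ω hω
  have := (ENNReal.tendsto_toReal ENNReal.zero_ne_top).comp
    (ENNReal.tendsto_atTop_zero_of_tsum_ne_top hω.ne)
  simpa only [Function.comp_def, ENNReal.toReal_ofReal (hg0 _ ω), ENNReal.toReal_zero] using this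

lemma summable_meanSampleError {α : ℕ → ℝ} {A Q : ℝ → ℝ} (hA : IsMixingRate α A)
    (hQ : AntitoneOn Q (Ioo 0 1)) (hQ0 : ∀ u ∈ Ioo 0 1, 0 < Q u) (hQi : Integrable Q uniform01)
    (hAQ : Integrable (fun u => Real.log (A u) * Q u) uniform01) {c : ℝ} (hc : 1 < c) :
    Summable fun k : ℕ => meanSampleError A Q ⌊c ^ k⌋₊ := by
  obtain ⟨C, hC⟩ := exists_sum_sampleError_geom_le hc
  have hint (N : ℕ) := integrable_sampleError hA hQ (fun u hu => (hQ0 u hu).le) N.cast_nonneg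
  have hbound : Integrable (fun u => C * (Q u * (1 + Real.log (A u)))) uniform01 :=
    ((hQi.add hAQ).congr (ae_of_all _ fun u => by simp only [Pi.add_apply]; ring)).const_mul C
  refine summable_of_sum_range_le (fun k => integral_nonneg_of_ae ?_)
    (c := ∫ u, C * (Q u * (1 + Real.log (A u))) ∂uniform01) fun K => ?_
  · filter_upwards [ae_mem_Ioo_uniform01] with u hu
    exact sampleError_nonneg (zero_le_one.trans (hA.one_le u)) (hQ0 u hu).le (Nat.cast_nonneg _)
  · simp only [meanSampleError]
    rw [← integral_finsetSum _ fun k _ => hint _]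
    refine integral_mono_ae (integrable_finsetSum _ fun k _ => hint _) hbound ?_
    filter_upwards [ae_mem_Ioo_uniform01] with u hu
    exact hC (A u) (Q u) (hA.one_le u) (hQ0 u hu) K

lemma integral_sampleMean_le {Y : ℕ → Ω → ℝ} {n : ℕ} {B : ℝ} (hY : ∀ i, Integrable (Y i) P)
    (hB : ∀ i, ∫ ω, Y i ω ∂P ≤ B) (hn : 0 < n) : ∫ ω, sampleMean Y n ω ∂P ≤ B := by
  simp only [sampleMean]
  rw [integral_div, integral_finsetSum _ fun i _ => hY i, div_le_iff₀ (by exact_mod_cast hn)]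
  exact (Finset.sum_le_card_nsmul _ _ B fun i _ => hB i).trans (by simp [mul_comm])

lemma integrable_sampleMean {Y : ℕ → Ω → ℝ} (hY : ∀ i, Integrable (Y i) P) (n : ℕ) :
    Integrable (sampleMean Y n) P :=
  (integrable_finsetSum _ fun i _ => hY i).div_const _

lemma sum_centered_truncated_eq {Y : ℕ → Ω → ℝ} (hlaw : ∀ i, IdentDistrib (Y i) (Y 0) P P)
    (M : ℝ) {n : ℕ} (hn : 0 < n) (ω : Ω) :
    ∑ l ∈ Finset.range n, (min (Y l ω) M / n - P[fun ω => min (Y l ω) M / n])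
      = sampleMean (fun i ω => min (Y i ω) M) n ω - ∫ ω, min (Y 0 ω) M ∂P := by
  have hmean (l : ℕ) : ∫ ω, min (Y l ω) M ∂P = ∫ ω, min (Y 0 ω) M ∂P :=
    ((hlaw l).comp (measurable_id.min measurable_const)).integral_eq
  have hn' : (n : ℝ) ≠ 0 := by exact_mod_cast hn.ne'
  simp only [integral_div, hmean, Finset.sum_sub_distrib, Finset.sum_const, Finset.card_range,
    nsmul_eq_mul, mul_div_cancel₀ _ hn', ← Finset.sum_div, sampleMean]

namespace DominatedMixing

variable {Y : ℕ → Ω → ℝ} {α : ℕ → ℝ} {A Q : ℝ → ℝ}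

lemma integral_excess_le (h : DominatedMixing P Y α Q) (hA : IsMixingRate α A) {N : ℝ} {r : ℕ}
    (hN : 0 < N) (hr : IsBlockLength α Q N r) (i : ℕ) :
    ∫ ω, excess (N / r) N (Y i ω) ∂P ≤ meanSampleError A Q N := by
  have hM : 0 ≤ N / r := by positivity
  have hint : Integrable (fun u => excess (N / r) N (Q u)) uniform01 := by
    refine Integrable.of_mem_Icc 0 N ((monotone_excess hM hN.le).measurable.comp_aemeasurable
      (aemeasurable_uniform01_of_antitoneOn h.antitoneOn)) (ae_of_all _ fun u => ?_)
    exact ⟨excess_nonneg hM hN.le _, excess_le hN.le _⟩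
  exact (((h.stochLE i).comp (monotone_excess hM hN.le)).integral_le
    (fun ω => excess_nonneg hM hN.le _) hint).trans
    (hr.integral_excess_le hA h.antitoneOn h.quantile_nonneg hN)

variable [IsProbabilityMeasure P]

lemma integrable_excess (h : DominatedMixing P Y α Q) {M N : ℝ} (hM : 0 ≤ M) (hN : 0 ≤ N) (i : ℕ) :
    Integrable (fun ω => excess M N (Y i ω)) P :=
  Integrable.of_mem_Icc 0 N ((monotone_excess hM hN).measurable.comp (h.measurable i)).aemeasurable
    (ae_of_all _ fun _ => ⟨excess_nonneg hM hN _, excess_le hN _⟩)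

lemma integrable_min (h : DominatedMixing P Y α Q) {M : ℝ} (hM : 0 ≤ M) (i : ℕ) :
    Integrable (fun ω => min (Y i ω) M) P :=
  Integrable.of_mem_Icc 0 M ((h.measurable i).min measurable_const).aemeasurable
    (ae_of_all _ fun ω => ⟨le_min (h.nonneg i ω) hM, min_le_right _ _⟩)

variable {n r : ℕ → ℕ}

lemma ae_tendsto_sampleMean_truncated (h : DominatedMixing P Y α Q) (hA : IsMixingRate α A)
    (hlaw : ∀ i, IdentDistrib (Y i) (Y 0) P P) (hn : ∀ k, 0 < n k)
    (hr : ∀ k, IsBlockLength α Q (n k) (r k)) (hsum : Summable fun k => meanSampleError A Q (n k)) :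
    ∀ᵐ ω ∂P, Tendsto (fun k => sampleMean (fun i ω => min (Y i ω) (n k / r k)) (n k) ω
      - ∫ ω, min (Y 0 ω) (n k / r k) ∂P) atTop (nhds 0) := by
  have hmoment (k : ℕ) := h.integral_pseudoHuber_truncated_le hA (hn k) (hr k)
  simp only [fun k => sum_centered_truncated_eq hlaw (n k / r k) (hn k)] at hmoment
  have hint (k : ℕ) : Integrable (fun ω => pseudoHuber
      (sampleMean (fun i ω => min (Y i ω) (n k / r k)) (n k) ω
        - ∫ ω, min (Y 0 ω) (n k / r k) ∂P)) P := by
    have hd := (integrable_sampleMean (fun i => h.integrable_min (M := n k / r k)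
      (by positivity) i) (n k)).sub (integrable_const (∫ ω, min (Y 0 ω) (n k / r k) ∂P))
    refine hd.norm.mono' (continuous_pseudoHuber.comp_aestronglyMeasurable
      hd.aestronglyMeasurable) (ae_of_all _ fun ω => ?_)
    rw [Real.norm_of_nonneg (pseudoHuber_nonneg _)]
    exact pseudoHuber_le_abs _
  filter_upwards [ae_tendsto_zero_of_summable_integral hint (fun k ω => pseudoHuber_nonneg _)
    (Summable.of_nonneg_of_le (fun k => integral_nonneg fun ω => pseudoHuber_nonneg _) hmoment
      (hsum.mul_left 4))] with ω hω
  exact tendsto_zero_of_pseudoHuber hω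

lemma ae_tendsto_sampleMean_excess (h : DominatedMixing P Y α Q) (hA : IsMixingRate α A)
    (hn : ∀ k, 0 < n k) (hr : ∀ k, IsBlockLength α Q (n k) (r k))
    (hsum : Summable fun k => meanSampleError A Q (n k)) :
    ∀ᵐ ω ∂P, Tendsto (fun k => sampleMean (fun i ω => excess (n k / r k) (n k) (Y i ω)) (n k) ω)
      atTop (nhds 0) := by
  have hint (k i : ℕ) := h.integrable_excess (M := n k / r k) (N := n k) (by positivity)
    (by positivity) i
  have hnonneg (k : ℕ) (ω : Ω) :
      0 ≤ sampleMean (fun i ω => excess (n k / r k) (n k) (Y i ω)) (n k) ω :=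
    sampleMean_nonneg (fun i ω => excess_nonneg (by positivity) (by positivity) _) _ _
  refine ae_tendsto_zero_of_summable_integral (fun k => integrable_sampleMean (hint k) (n k))
    hnonneg (Summable.of_nonneg_of_le (fun k => integral_nonneg (hnonneg k)) (fun k => ?_) hsum)
  exact integral_sampleMean_le (hint k)
    (h.integral_excess_le hA (by exact_mod_cast hn k) (hr k)) (hn k)

lemma tendsto_integral_truncated (h : DominatedMixing P Y α Q) (hA : IsMixingRate α A)
    (hY : Integrable (Y 0) P) (hn : ∀ k, 0 < n k) (hnlim : Tendsto n atTop atTop)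
    (hr : ∀ k, IsBlockLength α Q (n k) (r k)) (hsum : Summable fun k => meanSampleError A Q (n k)) :
    Tendsto (fun k => ∫ ω, min (Y 0 ω) (n k / r k) ∂P) atTop (nhds (∫ ω, Y 0 ω ∂P)) := by
  have hfar : Tendsto (fun k => ∫ ω, min (Y 0 ω) (n k) ∂P) atTop (nhds (∫ ω, Y 0 ω ∂P)) := by
    refine tendsto_integral_of_dominated_convergence (Y 0)
      (fun k => (h.integrable_min (n k).cast_nonneg 0).aestronglyMeasurable) hY
      (fun k => ae_of_all _ fun ω => ?_) (ae_of_all _ fun ω => ?_)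
    · rw [Real.norm_of_nonneg (le_min (h.nonneg 0 ω) (n k).cast_nonneg)]
      exact min_le_left _ _
    · refine tendsto_const_nhds.congr' ?_
      filter_upwards [(tendsto_natCast_atTop_atTop.comp hnlim).eventually_ge_atTop (Y 0 ω)]
        with k hk using (min_eq_left hk).symm
  have hlower : Tendsto (fun k => ∫ ω, min (Y 0 ω) (n k) ∂P - meanSampleError A Q (n k)) atTop
      (nhds (∫ ω, Y 0 ω ∂P)) := by simpa using hfar.sub hsum.tendsto_atTop_zero
  refine tendsto_of_tendsto_of_tendsto_of_le_of_le hlower tendsto_const_nhds (fun k => ?_)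
    fun k => integral_mono (h.integrable_min (by positivity) 0) hY fun ω => min_le_left _ _
  have hM : (0 : ℝ) ≤ n k / r k := by positivity
  have hexcess := h.integral_excess_le hA (by exact_mod_cast hn k) (hr k) 0
  have hle : ∫ ω, min (Y 0 ω) (n k) ∂P ≤ ∫ ω, (min (Y 0 ω) (n k / r k)
      + excess (n k / r k) (n k) (Y 0 ω)) ∂P :=
    integral_mono (h.integrable_min (n k).cast_nonneg 0) ((h.integrable_min hM 0).add
      (h.integrable_excess hM (n k).cast_nonneg 0)) fun ω =>
        sub_le_iff_le_add'.1 (min_sub_min_le_excess hM _)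
  rw [integral_add (h.integrable_min hM 0) (h.integrable_excess hM (n k).cast_nonneg 0)] at hle
  change _ - _ ≤ _
  linarith

lemma ae_tendsto_sampleMean_subseq (h : DominatedMixing P Y α Q) (hA : IsMixingRate α A)
    (hlaw : ∀ i, IdentDistrib (Y i) (Y 0) P P) (hα : Tendsto α atTop (nhds 0)) {ε : ℝ}
    (hε : 0 < ε) (hQε : ∀ u ∈ Ioo 0 1, ε ≤ Q u) (hQ : Integrable Q uniform01)
    (hn : ∀ k, 0 < n k) (hnlim : Tendsto n atTop atTop)
    (hsum : Summable fun k => meanSampleError A Q (n k)) :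
    ∀ᵐ ω ∂P, Tendsto (fun k => sampleMean Y (n k) ω) atTop (nhds (∫ ω, Y 0 ω ∂P)) := by
  choose r hr using fun k => exists_isBlockLength hα hε hQε (n k)
  have hY := (h.stochLE 0).integrable (h.measurable 0) (h.nonneg 0) hQ
  filter_upwards [h.ae_tendsto_sampleMean_truncated hA hlaw hn hr hsum,
    h.ae_tendsto_sampleMean_excess hA hn hr hsum] with ω htrunc hexcess
  have hsmall : Tendsto (fun k => sampleMean Y (n k) ω
      - sampleMean (fun i ω => min (Y i ω) (n k / r k)) (n k) ω) atTop (nhds 0) := by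
    refine squeeze_zero_norm' ?_ hexcess
    filter_upwards [hexcess.eventually_lt_const one_pos] with k hk
    exact abs_sampleMean_sub_truncated_le (by positivity) hk
      (div_le_self (n k).cast_nonneg (by exact_mod_cast (hr k).pos))
  have := (hsmall.add htrunc).add (h.tendsto_integral_truncated hA hY hn hnlim hr hsum)
  simpa using this

end DominatedMixing

theorem DominatedMixing.ae_tendsto_sampleMean [IsProbabilityMeasure P] {Y : ℕ → Ω → ℝ}
    {α : ℕ → ℝ} {A Q : ℝ → ℝ} (h : DominatedMixing P Y α Q) (hA : IsMixingRate α A)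
    (hlaw : ∀ i, IdentDistrib (Y i) (Y 0) P P) (hα : Tendsto α atTop (nhds 0)) {ε : ℝ}
    (hε : 0 < ε) (hQε : ∀ u ∈ Ioo 0 1, ε ≤ Q u) (hQ : Integrable Q uniform01)
    (hAQ : Integrable (fun u => Real.log (A u) * Q u) uniform01) :
    ∀ᵐ ω ∂P, Tendsto (fun n => sampleMean Y n ω) atTop (nhds (∫ ω, Y 0 ω ∂P)) := by
  let c (j : ℕ) : ℝ := 1 + 1 / ((j : ℝ) + 1)
  have hc (j : ℕ) : 1 < c j := lt_add_of_pos_right 1 Nat.one_div_pos_of_nat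
  have hsubseq (j : ℕ) : ∀ᵐ ω ∂P, Tendsto (fun k : ℕ => sampleMean Y ⌊c j ^ k⌋₊ ω) atTop
      (nhds (∫ ω, Y 0 ω ∂P)) :=
    h.ae_tendsto_sampleMean_subseq hA hlaw hα hε hQε hQ
      (fun k => Nat.floor_pos.2 (one_le_pow₀ (hc j).le))
      (tendsto_nat_floor_atTop.comp (tendsto_pow_atTop_atTop_of_one_lt (hc j)))
      (summable_meanSampleError hA h.antitoneOn (fun u hu => hε.trans_le (hQε u hu)) hQ hAQ (hc j))
  filter_upwards [ae_all_iff.2 hsubseq] with ω hω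
  refine tendsto_div_of_monotone_of_tendsto_div_floor_pow (fun n => ∑ i ∈ Finset.range n, Y i ω) _
    (monotone_nat_of_le_succ fun n => ?_) c hc ?_ hω
  · rw [Finset.sum_range_succ]
    exact le_add_of_nonneg_right (h.nonneg n ω)
  · simpa [c] using (tendsto_one_div_add_atTop_nhds_zero_nat (𝕜 := ℝ)).const_add 1

end StrongLaw

section MixingSequences

open ProbabilityTheory

variable {Ω : Type*} [MeasurableSpace Ω] {P : Measure Ω} {X : ℕ → Ω → ℝ} {α : ℕ → ℝ}

lemma tendsto_alphaExt (hα : Tendsto α atTop (nhds 0)) :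
    Tendsto (alphaExt α) atTop (nhds 0) := by
  refine (hα.comp (tendsto_nat_floor_atTop (α := ℝ))).congr' ?_
  filter_upwards [eventually_ge_atTop 1] with t ht
  rw [alphaExt, if_neg ht.not_gt, Function.comp_apply]

lemma alphaExt_natCast_succ (d : ℕ) : alphaExt α ((d : ℝ) + 1) = α (d + 1) := by
  rw [alphaExt, if_neg (by simp), ← Nat.cast_succ, Nat.floor_natCast]

lemma isMixingRate_one_add_rcInv (hα : Tendsto α atTop (nhds 0)) :
    IsMixingRate α fun u => 1 + rcInv (alphaExt α) (u / 2) where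
  aemeasurable := by
    refine (aemeasurable_uniform01_of_antitoneOn fun u hu v hv huv => ?_).const_add 1
    exact antitoneOn_rcInv (tendsto_alphaExt hα) (half_pos hu.1) (half_pos hv.1)
      (div_le_div_of_nonneg_right huv zero_le_two)
  one_le u := le_add_of_nonneg_right (rcInv_nonneg _ _)
  add_two_le u hu d hd := by
    have hlt : u / 2 < alphaExt α (d + 1) := by
      rw [alphaExt_natCast_succ]
      exact (half_lt_self hu.1).trans hd
    linarith [le_rcInv (tendsto_alphaExt hα) (half_pos hu.1) (by positivity) hlt]

/-- The functional `f` of the sequence `X` obeys the strong law of large numbers, with the mean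
of `f (X 0)` as limit. -/
def ObeysSLLN (P : Measure Ω) (X : ℕ → Ω → ℝ) (f : ℝ → ℝ) : Prop :=
  ∀ᵐ ω ∂P, Tendsto (fun n => sampleMean (fun i ω => f (X i ω)) n ω) atTop
    (nhds (∫ ω, f (X 0 ω) ∂P))

lemma ObeysSLLN.const_mul {f : ℝ → ℝ} (h : ObeysSLLN P X f) (c : ℝ) :
    ObeysSLLN P X fun x => c * f x := by
  filter_upwards [h] with ω hω
  simpa only [sampleMean, ← Finset.mul_sum, mul_div_assoc, integral_const_mul] using hω.const_mul c

lemma obeysSLLN_indicator_one {ε : ℝ} (hε : 0 < ε)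
    (hX : ∀ f : ℝ → ℝ, Measurable f → (∀ x, 0 ≤ f x) → (∀ x, f x ≤ ε) → ObeysSLLN P X f)
    {s : Set ℝ} (hs : MeasurableSet s) : ObeysSLLN P X (s.indicator 1) := by
  have hind0 (x : ℝ) : 0 ≤ s.indicator (1 : ℝ → ℝ) x := indicator_nonneg (fun _ _ => zero_le_one) x
  have hind1 (x : ℝ) : s.indicator (1 : ℝ → ℝ) x ≤ 1 :=
    indicator_le_self' (fun _ _ => zero_le_one) x
  have h := (hX (fun x => ε * s.indicator 1 x) ((measurable_one.indicator hs).const_mul ε)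
    (fun x => mul_nonneg hε.le (hind0 x)) fun x => mul_le_of_le_one_right hε.le (hind1 x)).const_mul
    ε⁻¹
  simpa only [inv_mul_cancel_left₀ hε.ne'] using h

variable [IsProbabilityMeasure P]

lemma dominatedMixing_comp_of_le (hmeas : ∀ i, Measurable (X i))
    (hident : ∀ i, P.map (X i) = P.map (X 0)) {f φ : ℝ → ℝ} (hf : Measurable f)
    (hφ : Measurable φ) (hf0 : ∀ x, 0 ≤ f x) (hfφ : ∀ x, f x ≤ φ x) :
    DominatedMixing P (fun i ω => f (X i ω)) (alphaCoef P X)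
      (tailQuantile P fun ω => φ (X 0 ω)) where
  measurable i := hf.comp (hmeas i)
  nonneg i ω := hf0 _
  mixing := alphaMixingBound_alphaCoef.comp hf
  stochLE i := by
    have hlaw : IdentDistrib (X i) (X 0) P P :=
      ⟨(hmeas i).aemeasurable, (hmeas 0).aemeasurable, hident i⟩
    exact ⟨fun ω => φ (X i ω), fun ω => hfφ _, (hlaw.comp hφ).trans
      (identDistrib_tailQuantile (hφ.comp (hmeas 0)) fun ω => (hf0 _).trans (hfφ _))⟩
  antitoneOn := antitoneOn_tailQuantile (hφ.comp (hmeas 0))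
  quantile_nonneg u _ := rcInv_nonneg _ u

theorem obeysSLLN_of_le (hmeas : ∀ i, Measurable (X i))
    (hident : ∀ i, P.map (X i) = P.map (X 0)) {φ : ℝ → ℝ} (hφ : Measurable φ) {ε : ℝ}
    (hε : 0 < ε) (hφε : ∀ x, ε ≤ φ x) (hint : Integrable (fun ω => φ (X 0 ω)) P)
    (hmix : Tendsto (alphaCoef P X) atTop (nhds 0))
    (hcond : Integrable (fun s => Real.log (1 + rcInv (alphaExt (alphaCoef P X)) (s / 2)) *
      tailQuantile P (fun ω => φ (X 0 ω)) s) uniform01)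
    {f : ℝ → ℝ} (hf : Measurable f) (hf0 : ∀ x, 0 ≤ f x) (hfφ : ∀ x, f x ≤ φ x) :
    ObeysSLLN P X f := by
  have hlaw (i : ℕ) : IdentDistrib (X i) (X 0) P P :=
    ⟨(hmeas i).aemeasurable, (hmeas 0).aemeasurable, hident i⟩
  have hφX : Measurable fun ω => φ (X 0 ω) := hφ.comp (hmeas 0)
  exact (dominatedMixing_comp_of_le hmeas hident hf hφ hf0 hfφ).ae_tendsto_sampleMean
    (isMixingRate_one_add_rcInv hmix) (fun i => (hlaw i).comp hf) hmix hε
    (fun u hu => le_tailQuantile hφX (fun ω => hφε _) hu)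
    ((identDistrib_tailQuantile hφX fun ω => hε.le.trans (hφε _)).integrable_iff.1 hint) hcond

end MixingSequences

section UShaped

variable {φ : ℝ → ℝ} {x₀ : ℝ}

lemma le_max_of_antitoneOn_of_monotoneOn {a b x : ℝ} (hdec : AntitoneOn φ (Iic x₀))
    (hinc : MonotoneOn φ (Ici x₀)) (hx : x ∈ Icc a b) : φ x ≤ max (φ a) (φ b) := by
  rcases le_total x x₀ with h | h
  · exact le_max_of_le_left (hdec (hx.1.trans h) h hx.1)
  · exact le_max_of_le_right (hinc h (h.trans hx.2) hx.2)

lemma measurable_of_antitoneOn_of_monotoneOn (hdec : AntitoneOn φ (Iic x₀))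
    (hinc : MonotoneOn φ (Ici x₀)) : Measurable φ :=
  measurable_of_Iic fun _ => OrdConnected.measurableSet ⟨fun _ ha _ hb _ hx =>
    (le_max_of_antitoneOn_of_monotoneOn hdec hinc hx).trans (max_le ha hb)⟩

end UShaped

section UniformConvergence

lemma exists_pos_measureReal_punctured_Icc_lt (μ : Measure ℝ) [IsFiniteMeasure μ] (x : ℝ) {δ : ℝ}
    (hδ : 0 < δ) : ∃ r > 0, μ.real (Icc (x - r) (x + r) \ {x}) < δ := by
  have hlim := (ENNReal.tendsto_toReal (measure_ne_top μ {x})).comp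
    (tendsto_measure_Icc_nhdsWithin_right' μ x)
  obtain ⟨r, hr, hr0⟩ := ((hlim.eventually_lt_const (lt_add_of_pos_right _ hδ)).and
    self_mem_nhdsWithin).exists
  refine ⟨r, hr0, ?_⟩
  have hx : x ∈ Icc (x - r) (x + r) := ⟨sub_le_self _ hr0.le, le_add_of_nonneg_right hr0.le⟩
  rw [measureReal_sdiff (singleton_subset_iff.2 hx) (measurableSet_singleton x)]
  exact sub_lt_iff_lt_add'.2 hr

variable {Ω : Type*} {X : ℕ → Ω → ℝ}

/-- The relative frequency of the event `X i ∈ s` among the indices `i < n`. -/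
noncomputable def relFreq (X : ℕ → Ω → ℝ) (s : Set ℝ) (n : ℕ) (ω : Ω) : ℝ :=
  sampleMean (fun i ω => s.indicator 1 (X i ω)) n ω

lemma relFreq_mono {s t : Set ℝ} (h : s ⊆ t) (n : ℕ) (ω : Ω) : relFreq X s n ω ≤ relFreq X t n ω :=
  sampleMean_mono (fun _ _ => indicator_le_indicator_of_subset h (fun _ => zero_le_one) _) n ω

lemma relFreq_nonneg (s : Set ℝ) (n : ℕ) (ω : Ω) : 0 ≤ relFreq X s n ω :=
  sampleMean_nonneg (fun _ _ => indicator_nonneg (fun _ _ => zero_le_one) _) n ω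

lemma empDF_eq_relFreq (n : ℕ) (ω : Ω) (y : ℝ) : empDF X n ω y = relFreq X (Iic y) n ω := by
  simp [empDF, relFreq, sampleMean, indicator]

lemma relFreq_compl {n : ℕ} (hn : 0 < n) (s : Set ℝ) (ω : Ω) :
    relFreq X sᶜ n ω = 1 - relFreq X s n ω := by
  have hn' : (n : ℝ) ≠ 0 := by exact_mod_cast hn.ne'
  simp only [relFreq, sampleMean, indicator_compl, Pi.sub_apply, Pi.one_apply,
    Finset.sum_sub_distrib, Finset.sum_const, Finset.card_range, nsmul_one, sub_div, div_self hn']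

variable [MeasurableSpace Ω] {P : Measure Ω} {φ : ℝ → ℝ}

lemma ObeysSLLN.eventually_abs_relFreq_sub_lt {s : Set ℝ} (h : ObeysSLLN P X (s.indicator 1))
    (hX : Measurable (X 0)) (hs : MeasurableSet s) {δ : ℝ} (hδ : 0 < δ) :
    ∀ᵐ ω ∂P, ∀ᶠ n in atTop, |relFreq X s n ω - P.real (X 0 ⁻¹' s)| < δ := by
  have hint : ∫ ω, s.indicator 1 (X 0 ω) ∂P = P.real (X 0 ⁻¹' s) := integral_indicator_one (hX hs)
  rw [ObeysSLLN, hint] at h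
  filter_upwards [h] with ω hω using Metric.tendsto_nhds.1 hω δ hδ

/-- Almost surely, the weighted distance between empirical and true distribution function is
eventually at most `η` throughout `s`. -/
def EventuallyCloseOn (P : Measure Ω) (X : ℕ → Ω → ℝ) (φ : ℝ → ℝ) (η : ℝ) (s : Set ℝ) : Prop :=
  ∀ᵐ ω ∂P, ∀ᶠ n : ℕ in atTop, ∀ y ∈ s, |empDF X n ω y - distFun P (X 0) y| * φ y ≤ η

namespace EventuallyCloseOn

variable {η : ℝ} {s t : Set ℝ}

lemma mono (h : EventuallyCloseOn P X φ η t) (hst : s ⊆ t) : EventuallyCloseOn P X φ η s := by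
  filter_upwards [h] with ω hω
  filter_upwards [hω] with n hn y hy using hn y (hst hy)

lemma union (hs : EventuallyCloseOn P X φ η s) (ht : EventuallyCloseOn P X φ η t) :
    EventuallyCloseOn P X φ η (s ∪ t) := by
  filter_upwards [hs, ht] with ω hωs hωt
  filter_upwards [hωs, hωt] with n hns hnt y hy
  exact hy.elim (hns y) (hnt y)

lemma mono_weight {ψ : ℝ → ℝ} (h : EventuallyCloseOn P X ψ η s) (hφψ : ∀ y ∈ s, φ y ≤ ψ y) :
    EventuallyCloseOn P X φ η s := by
  filter_upwards [h] with ω hω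
  filter_upwards [hω] with n hn y hy
  exact (mul_le_mul_of_nonneg_left (hφψ y hy) (abs_nonneg _)).trans (hn y hy)

lemma of_isCompact (hs : IsCompact s)
    (h : ∀ x, ∃ t ∈ nhds x, EventuallyCloseOn P X φ η t) : EventuallyCloseOn P X φ η s := by
  refine hs.induction_on (p := EventuallyCloseOn P X φ η) ?_ (fun _ _ hst ht => ht.mono hst)
    (fun _ _ => union) fun x _ => ?_
  · simp [EventuallyCloseOn]
  · obtain ⟨t, ht, hclose⟩ := h x
    exact ⟨t, mem_nhdsWithin_of_mem_nhds ht, hclose⟩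

end EventuallyCloseOn

lemma ae_eventually_relFreq_sub_mul_le (hX : Measurable (X 0)) (hφ0 : ∀ x, 0 ≤ φ x)
    (hint : Integrable (fun ω => φ (X 0 ω)) P) {S : Set ℝ} (hS : MeasurableSet S) {η : ℝ}
    (hη : ∫ ω, S.indicator φ (X 0 ω) ∂P < η) (hslln : ObeysSLLN P X (S.indicator φ)) :
    ∀ᵐ ω ∂P, ∀ᶠ n : ℕ in atTop, ∀ D ⊆ S, MeasurableSet D → ∀ c, 0 ≤ c → (∀ x ∈ D, c ≤ φ x) →
      |relFreq X D n ω - P.real (X 0 ⁻¹' D)| * c ≤ η := by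
  filter_upwards [hslln] with ω hω
  filter_upwards [hω.eventually_lt_const hη] with n hn D hDS hD c hc hcφ
  -- Markov's inequality, for the empirical and for the true law.
  have hle (x : ℝ) : c * D.indicator 1 x ≤ S.indicator φ x := by
    by_cases hx : x ∈ D
    · simpa [hx, hDS hx] using hcφ x hx
    · simpa [hx] using indicator_nonneg (fun x _ => hφ0 x) x
  have hfreq : c * relFreq X D n ω ≤ η := by
    rw [relFreq, sampleMean, ← mul_div_assoc, Finset.mul_sum]
    exact (sampleMean_mono (fun i ω => hle (X i ω)) n ω).trans hn.le
  have hprob : c * P.real (X 0 ⁻¹' D) ≤ η := by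
    rw [← integral_indicator_one (hX hD), ← integral_const_mul]
    refine (integral_mono_of_nonneg (ae_of_all _ fun ω => ?_) (hint.indicator (hX hS))
      (ae_of_all _ fun ω => hle (X 0 ω))).trans hη.le
    exact mul_nonneg hc (indicator_nonneg (fun _ _ => zero_le_one) _)
  rw [← abs_of_nonneg hc, ← abs_mul, sub_mul, mul_comm, mul_comm _ c]
  exact abs_sub_le_of_nonneg_of_le (mul_nonneg hc (relFreq_nonneg D n ω)) hfreq
    (mul_nonneg hc measureReal_nonneg) hprob

lemma eventuallyCloseOn_Iic (hX : Measurable (X 0)) (hφ0 : ∀ x, 0 ≤ φ x)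
    (hint : Integrable (fun ω => φ (X 0 ω)) P) {a η : ℝ} (hφ : AntitoneOn φ (Iic a))
    (hη : ∫ ω, (Iic a).indicator φ (X 0 ω) ∂P < η) (hslln : ObeysSLLN P X ((Iic a).indicator φ)) :
    EventuallyCloseOn P X φ η (Iic a) := by
  filter_upwards [ae_eventually_relFreq_sub_mul_le hX hφ0 hint measurableSet_Iic hη hslln] with ω hω
  filter_upwards [hω] with n hn y hy
  rw [empDF_eq_relFreq]
  exact hn (Iic y) (Iic_subset_Iic.2 hy) measurableSet_Iic (φ y) (hφ0 y) fun x hx =>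
    hφ (hx.out.trans hy) hy hx

lemma tendsto_integral_indicator_zero (hX : Measurable (X 0))
    (hint : Integrable (fun ω => φ (X 0 ω)) P) {S : ℕ → Set ℝ}
    (hS : ∀ j, MeasurableSet (S j)) (hlim : ∀ x, ∀ᶠ j in atTop, x ∉ S j) :
    Tendsto (fun j => ∫ ω, (S j).indicator φ (X 0 ω) ∂P) atTop (nhds 0) := by
  rw [← integral_zero Ω ℝ (μ := P)]
  refine tendsto_integral_of_dominated_convergence (fun ω => |φ (X 0 ω)|)
    (fun j => (hint.indicator (hX (hS j))).aestronglyMeasurable) hint.abs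
    (fun j => ae_of_all _ fun ω => norm_indicator_le_norm_self _ _) (ae_of_all _ fun ω => ?_)
  refine tendsto_const_nhds.congr' ?_
  filter_upwards [hlim (X 0 ω)] with j hj using (indicator_of_notMem hj φ).symm

lemma ae_tendsto_iSup_of_eventuallyCloseOn_univ (hφ0 : ∀ x, 0 ≤ φ x)
    (h : ∀ η > 0, EventuallyCloseOn P X φ η univ) :
    ∀ᵐ ω ∂P, Tendsto (fun n : ℕ => ⨆ x : ℝ, |empDF X n ω x - distFun P (X 0) x| * φ x) atTop
      (nhds 0) := by
  filter_upwards [ae_all_iff.2 fun m : ℕ => h _ (Nat.one_div_pos_of_nat (n := m))] with ω hω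
  refine Metric.tendsto_nhds.2 fun η hη => ?_
  obtain ⟨m, hm⟩ := exists_nat_one_div_lt hη
  filter_upwards [hω m] with n hn
  rw [Real.dist_0_eq_abs,
    abs_of_nonneg (Real.iSup_nonneg fun y => mul_nonneg (abs_nonneg _) (hφ0 y))]
  exact (Real.iSup_le (fun y => hn y (mem_univ y)) Nat.one_div_pos_of_nat.le).trans_lt hm

variable [IsProbabilityMeasure P]

lemma eventuallyCloseOn_Ici (hX : Measurable (X 0)) (hφ0 : ∀ x, 0 ≤ φ x)
    (hint : Integrable (fun ω => φ (X 0 ω)) P) {b η : ℝ} (hφ : MonotoneOn φ (Ici b))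
    (hη : ∫ ω, (Ioi b).indicator φ (X 0 ω) ∂P < η) (hslln : ObeysSLLN P X ((Ioi b).indicator φ)) :
    EventuallyCloseOn P X φ η (Ici b) := by
  filter_upwards [ae_eventually_relFreq_sub_mul_le hX hφ0 hint measurableSet_Ioi hη hslln] with ω hω
  filter_upwards [hω, eventually_gt_atTop 0] with n hn hn0 y hy
  have hcompl := hn (Ioi y) (Ioi_subset_Ioi hy) measurableSet_Ioi (φ y) (hφ0 y) fun x hx =>
    hφ hy (hy.out.trans hx.out.le) hx.out.le
  rw [← compl_Iic, relFreq_compl hn0, preimage_compl,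
    probReal_compl_eq_one_sub (hX measurableSet_Iic), sub_sub_sub_cancel_left, abs_sub_comm]
    at hcompl
  rwa [empDF_eq_relFreq]

lemma abs_relFreq_sub_le {S D T : Set ℝ} {n : ℕ} {ω : Ω} {δ : ℝ} (hSD : S ⊆ D) (hDT : D ⊆ T)
    (hST : P.real (X 0 ⁻¹' (T \ S)) < δ)
    (hS : |relFreq X S n ω - P.real (X 0 ⁻¹' S)| < δ)
    (hT : |relFreq X T n ω - P.real (X 0 ⁻¹' T)| < δ) :
    |relFreq X D n ω - P.real (X 0 ⁻¹' D)| ≤ 2 * δ := by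
  have hmT : P.real (X 0 ⁻¹' T) ≤ P.real (X 0 ⁻¹' S) + P.real (X 0 ⁻¹' (T \ S)) :=
    (measureReal_mono (by rw [← preimage_union]; exact preimage_mono (by simp))).trans
      (measureReal_union_le _ _)
  have hmSD : P.real (X 0 ⁻¹' S) ≤ P.real (X 0 ⁻¹' D) := measureReal_mono (preimage_mono hSD)
  have hmDT : P.real (X 0 ⁻¹' D) ≤ P.real (X 0 ⁻¹' T) := measureReal_mono (preimage_mono hDT)
  have hfSD := relFreq_mono (X := X) hSD n ω
  have hfDT := relFreq_mono (X := X) hDT n ω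
  have hSδ := (abs_lt.1 hS).1
  have hTδ := (abs_lt.1 hT).2
  exact abs_le.2 ⟨by linarith, by linarith⟩

lemma exists_mem_nhds_eventuallyCloseOn_const (hX : Measurable (X 0))
    (hslln : ∀ s : Set ℝ, MeasurableSet s → ObeysSLLN P X (s.indicator 1)) {B η : ℝ} (hB : 0 < B)
    (hη : 0 < η) (x : ℝ) : ∃ t ∈ nhds x, EventuallyCloseOn P X (fun _ => B) η t := by
  have := Measure.isProbabilityMeasure_map (μ := P) hX.aemeasurable
  have hδ : 0 < η / (2 * B) := by positivity
  obtain ⟨r, hr, hsmall⟩ := exists_pos_measureReal_punctured_Icc_lt (P.map (X 0)) x hδ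
  have hgap {E : Set ℝ} (hE : E ⊆ Icc (x - r) (x + r) \ {x}) :
      P.real (X 0 ⁻¹' E) < η / (2 * B) := by
    refine (measureReal_mono (preimage_mono hE)).trans_lt ?_
    rwa [← map_measureReal_apply hX (measurableSet_Icc.diff (measurableSet_singleton x))]
  have hfreq {s : Set ℝ} (hs : MeasurableSet s) :=
    (hslln s hs).eventually_abs_relFreq_sub_lt hX hs hδ
  refine ⟨Ioo (x - r) (x + r), Ioo_mem_nhds (by linarith) (by linarith), ?_⟩
  filter_upwards [hfreq (measurableSet_Iic (a := x - r)), hfreq (measurableSet_Iio (a := x)),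
    hfreq (measurableSet_Iic (a := x)), hfreq (measurableSet_Iic (a := x + r))]
    with ω hω₁ hω₂ hω₃ hω₄
  filter_upwards [hω₁, hω₂, hω₃, hω₄] with n hn₁ hn₂ hn₃ hn₄ y hy
  suffices |relFreq X (Iic y) n ω - P.real (X 0 ⁻¹' Iic y)| ≤ 2 * (η / (2 * B)) by
    rw [empDF_eq_relFreq, ← le_div_iff₀ hB]
    exact this.trans_eq (by field_simp)
  rcases lt_or_ge y x with hyx | hxy
  · refine abs_relFreq_sub_le (Iic_subset_Iic.2 hy.1.le) (Iic_subset_Iio.2 hyx) (hgap ?_) hn₁ hn₂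
    rintro z ⟨hzx, hz⟩
    exact ⟨⟨(notMem_Iic.1 hz).le, by linarith [hzx.out]⟩, hzx.out.ne⟩
  · refine abs_relFreq_sub_le (Iic_subset_Iic.2 hxy) (Iic_subset_Iic.2 hy.2.le) (hgap ?_) hn₃ hn₄
    rintro z ⟨hzr, hz⟩
    exact ⟨⟨by linarith [notMem_Iic.1 hz], hzr⟩, (notMem_Iic.1 hz).ne'⟩

lemma eventuallyCloseOn_univ (hX : Measurable (X 0)) (hφ0 : ∀ x, 0 < φ x) {x₀ : ℝ}
    (hdec : AntitoneOn φ (Iic x₀)) (hinc : MonotoneOn φ (Ici x₀))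
    (hint : Integrable (fun ω => φ (X 0 ω)) P)
    (hone : ∀ s : Set ℝ, MeasurableSet s → ObeysSLLN P X (s.indicator 1))
    (hφ : ∀ s : Set ℝ, MeasurableSet s → ObeysSLLN P X (s.indicator φ)) {η : ℝ} (hη : 0 < η) :
    EventuallyCloseOn P X φ η univ := by
  have hright := tendsto_integral_indicator_zero hX hint (S := fun j : ℕ => Ioi (j : ℝ))
    (fun _ => measurableSet_Ioi) fun x =>
      (tendsto_natCast_atTop_atTop.eventually_ge_atTop x).mono fun _ => not_lt.2
  have hleft := tendsto_integral_indicator_zero hX hint (S := fun j : ℕ => Iic (-j : ℝ))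
    (fun _ => measurableSet_Iic) fun x =>
      (tendsto_natCast_atTop_atTop.eventually_gt_atTop (-x)).mono fun _ hj =>
        not_le.2 (neg_lt.1 hj)
  obtain ⟨j, hjright, hjleft, hj⟩ := ((hright.eventually_lt_const hη).and
    ((hleft.eventually_lt_const hη).and
      (tendsto_natCast_atTop_atTop.eventually_ge_atTop |x₀|))).exists
  obtain ⟨hjx₀, hx₀j⟩ := abs_le.1 hj
  have htails := (eventuallyCloseOn_Iic hX (fun x => (hφ0 x).le) hint
      (hdec.mono (Iic_subset_Iic.2 hjx₀)) hjleft (hφ _ measurableSet_Iic)).union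
    (eventuallyCloseOn_Ici hX (fun x => (hφ0 x).le) hint
      (hinc.mono (Ici_subset_Ici.2 hx₀j)) hjright (hφ _ measurableSet_Ioi))
  have hcentre : EventuallyCloseOn P X φ η (Icc (-j) j) :=
    (EventuallyCloseOn.of_isCompact isCompact_Icc (exists_mem_nhds_eventuallyCloseOn_const hX hone
      (lt_max_of_lt_right (hφ0 j)) hη)).mono_weight fun y hy =>
        le_max_of_antitoneOn_of_monotoneOn hdec hinc hy
  refine (htails.union hcentre).mono fun y _ => ?_
  simp only [mem_union, mem_Iic, mem_Ici, mem_Icc]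
  grind

end UniformConvergence

theorem slln_weighted_empirical_alpha_mixing_general
    {Ω : Type*} [MeasurableSpace Ω] (P : Measure Ω) [IsProbabilityMeasure P]
    (X : ℕ → Ω → ℝ) (hmeas : ∀ i, Measurable (X i))
    (hident : ∀ i, Measure.map (X i) P = Measure.map (X 0) P)
    {φ : ℝ → ℝ} {ε : ℝ} (hε : 0 < ε) (hφε : ∀ x, ε ≤ φ x) {x₀ : ℝ}
    (hdec : AntitoneOn φ (Iic x₀)) (hinc : MonotoneOn φ (Ici x₀))
    (hint : Integrable (fun ω => φ (X 0 ω)) P)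
    (hmix : Tendsto (alphaCoef P X) atTop (nhds 0))
    (hcond : IntegrableOn
      (fun s => Real.log (1 + rcInv (alphaExt (alphaCoef P X)) (s / 2)) *
        rcInv (fun x => 1 - distFun P (fun ω => φ (X 0 ω)) x) s)
      (Set.Ioo (0 : ℝ) 1)) :
    ∀ᵐ ω ∂P, Tendsto
      (fun n : ℕ => ⨆ x : ℝ, |empDF X n ω x - distFun P (X 0) x| * φ x)
      atTop (nhds 0) := by
  have hφ : Measurable φ := measurable_of_antitoneOn_of_monotoneOn hdec hinc
  have hφ0 (x : ℝ) : 0 < φ x := hε.trans_le (hφε x)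
  have hslln (f : ℝ → ℝ) (hf : Measurable f) (hf0 : ∀ x, 0 ≤ f x) (hfφ : ∀ x, f x ≤ φ x) :
      ObeysSLLN P X f :=
    obeysSLLN_of_le hmeas hident hφ hε hφε hint hmix hcond hf hf0 hfφ
  have hone (s : Set ℝ) (hs : MeasurableSet s) : ObeysSLLN P X (s.indicator 1) :=
    obeysSLLN_indicator_one hε
      (fun f hf hf0 hfε => hslln f hf hf0 fun x => (hfε x).trans (hφε x)) hs
  have hweight (s : Set ℝ) (hs : MeasurableSet s) : ObeysSLLN P X (s.indicator φ) :=
    hslln _ (hφ.indicator hs) (indicator_nonneg fun x _ => (hφ0 x).le)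
      (indicator_le_self' fun x _ => (hφ0 x).le)
  exact ae_tendsto_iSup_of_eventuallyCloseOn_univ (fun x => (hφ0 x).le) fun η hη =>
    eventuallyCloseOn_univ (hmeas 0) hφ0 hdec hinc hint hone hweight hη

/-- **SLLN for weighted empirical distribution functions of α-mixing data.**
If `(X i)` is identically distributed with df `F`, α-mixing, `φ` a weight function with
`∫ φ dF < ∞`, and `∫_0^1 log(1 + α^→(s/2)) Ḡ^→(s) ds < ∞` where `G` is the df of `φ(X 1)`,
then `sup_x |F̂_n(x) - F(x)| φ(x) → 0` almost surely. -/
theorem slln_weighted_empirical_alpha_mixing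
    {Ω : Type*} [MeasurableSpace Ω] (P : Measure Ω) [IsProbabilityMeasure P]
    (X : ℕ → Ω → ℝ) (hmeas : ∀ i, Measurable (X i))
    (hident : ∀ i, Measure.map (X i) P = Measure.map (X 0) P)
    (φ : ℝ → ℝ) (hφ : IsWeightFun φ)
    (hint : Integrable (fun ω => φ (X 0 ω)) P)
    (hmix : Tendsto (alphaCoef P X) atTop (nhds 0))
    (hcond : IntegrableOn
      (fun s => Real.log (1 + rcInv (alphaExt (alphaCoef P X)) (s / 2)) *
        rcInv (fun x => 1 - distFun P (fun ω => φ (X 0 ω)) x) s)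
      (Set.Ioo (0 : ℝ) 1)) :
    ∀ᵐ ω ∂P, Tendsto
      (fun n : ℕ => ⨆ x : ℝ, |empDF X n ω x - distFun P (X 0) x| * φ x)
      atTop (nhds 0) := by
  obtain ⟨_, ⟨ε, hε, hφε⟩, x₀, hdec, hinc⟩ := hφ
  exact slln_weighted_empirical_alpha_mixing_general P X hmeas hident hε hφε
    (fun _ _ _ hy hxy => hdec _ _ hxy hy) (fun _ hx _ _ hxy => hinc _ _ hx hxy) hint hmix hcond
end
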